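/- arXiv:0712.0837 — 2 statements merged into one kernel-verified Lean document; each statement's English description precedes it below -/
import Mathlib

section
/- There exists a group homomorphism ρ from SL(2,ℤ) into the group of invertible ℂ-linear endomorphisms of the free ℂ-module E with basis {e_n}_{n∈ℕ⁺} (equivalently, into invertible column-finite ℕ⁺×ℕ⁺ matrices) such that, writing ρ(Y)_{i,j} for the coefficient of e_i in ρ(Y)(e_j): (a) ρ(T) is the divisor matrix, i.e. ρ(T)_{i,j} = 1 if i divides j and 0 otherwise, where T = [[1,1],[0,1]]; (b) ρ(Y)_{i,j} is an integer for every Y ∈ SL(2,ℤ) and all i, j; (c) for every Y ∈ SL(2,ℤ) there exist positive constants C and c with ρ(Y)_{i,j} = 0 whenever i > C·j^c and |ρ(Y)_{i,j}| ≤ C·j^c for all i, j. -/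
/-- The standard unipotent generator `T = [[1,1],[0,1]]` of `SL(2,ℤ)`. -/
def Tgen : Matrix.SpecialLinearGroup (Fin 2) ℤ :=
  ⟨!![1, 1; 0, 1], by norm_num [Matrix.det_fin_two_of]⟩

/-- The `(i,j)` matrix entry of a linear automorphism of the free module `E = ℕ+ →₀ ℂ`
with basis `(e_n)`, i.e. the coefficient of `e_i` in the image of `e_j`. -/
noncomputable def entry (g : (ℕ+ →₀ ℂ) ≃ₗ[ℂ] (ℕ+ →₀ ℂ)) (i j : ℕ+) : ℂ :=
  g (Finsupp.single j 1) i

/-!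
Let `V` be the map `e_n ↦ e_{2n}` and `D` the divisor matrix. In the `ℓ¹`-norm with weight `n ^ c`,
the norms of `D - 1` and of `(D - 1) * V - 1` tend to `0` as `c → ∞`: the proper divisors of `n` are
at most `n / 2`, and those of `2 * n` other than `n` are at most `2 * n / 3`. Any two endomorphisms
`N`, `N'` with these two properties are conjugate. Indeed, `Ξ * N = N' * Ξ` together with
`Ξ ≡ 1` modulo `V` is a fixed-point equation, whose unique solution is a geometric series that is
locally finite and of polynomial growth; uniqueness makes the solutions for `(N, N')` and `(N', N)`
inverse to each other. Hence it suffices to represent `SL(2, ℤ)` with `T` acting as `1 + N` for a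
single such `N`. The presentation `⟨s, r ∣ s ^ 4 = 1, r ^ 3 = s ^ 2⟩` reduces this to `2 × 2`
matrices over `ℤ[h]`, with `h` acting by `e_{4n} ↦ e_n`. All of this takes place over `ℤ`, so that
the entries are integers and entries of absolute value less than `1` vanish.
-/

section Presentation

open Matrix ModularGroup
open scoped MatrixGroups

/-- Nonnegativity of the entries of a matrix, together with a bound that excludes the identity.
Nonempty products of `T` and its transpose `S⁻¹ * (S * T) ^ 2` have this property. -/
def IsPositiveSL2 (A : SL(2, ℤ)) : Prop :=
  0 ≤ A 0 0 ∧ 0 ≤ A 0 1 ∧ 0 ≤ A 1 0 ∧ 0 ≤ A 1 1 ∧ 2 < A 0 0 + A 0 1 + A 1 0 + A 1 1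

instance : DecidablePred IsPositiveSL2 := fun A => by
  unfold IsPositiveSL2
  infer_instance

theorem isPositiveSL2_T : IsPositiveSL2 T := by decide

theorem isPositiveSL2_S_inv_mul : IsPositiveSL2 (S⁻¹ * (S * T) ^ 2) := by decide

theorem IsPositiveSL2.mul_T {A : SL(2, ℤ)} (hA : IsPositiveSL2 A) : IsPositiveSL2 (A * T) := by
  simp only [IsPositiveSL2, Matrix.SpecialLinearGroup.coe_mul, coe_T, mul_apply, Fin.sum_univ_two,
    of_apply, cons_val', cons_val_zero, cons_val_one, cons_val_fin_one] at hA ⊢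
  lia

theorem IsPositiveSL2.mul_S_inv_mul {A : SL(2, ℤ)} (hA : IsPositiveSL2 A) :
    IsPositiveSL2 (A * (S⁻¹ * (S * T) ^ 2)) := by
  have hU : ((S⁻¹ * (S * T) ^ 2 : SL(2, ℤ)) : Matrix (Fin 2) (Fin 2) ℤ) = !![1, 0; 1, 1] := by
    decide
  simp only [IsPositiveSL2, Matrix.SpecialLinearGroup.coe_mul A, hU, mul_apply, Fin.sum_univ_two,
    of_apply, cons_val', cons_val_zero, cons_val_one, cons_val_fin_one] at hA ⊢
  lia

variable {G : Type*} [Group G] {s r : G}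

/-- The submonoid of a group generated by `s⁻¹ * r` and `s⁻¹ * r ^ 2`; for `s = S` and `r = S * T`
these are the two elementary matrices with nonnegative entries. -/
def positiveWords (s r : G) : Submonoid G :=
  Submonoid.closure {s⁻¹ * r, s⁻¹ * r ^ 2}

theorem mul_mem_positiveWords {w : G} (hw : w ∈ positiveWords s r) :
    w * (s⁻¹ * r) ∈ positiveWords s r :=
  mul_mem hw (Submonoid.subset_closure (Or.inl rfl))

theorem mul_sq_mem_positiveWords {w : G} (hw : w ∈ positiveWords s r) :
    w * (s⁻¹ * r ^ 2) ∈ positiveWords s r :=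
  mul_mem hw (Submonoid.subset_closure (Or.inr rfl))

theorem positiveWords_induction {P : G → Prop} (one : P 1)
    (mul : ∀ w ∈ positiveWords s r, P w → P (w * (s⁻¹ * r)))
    (mul_sq : ∀ w ∈ positiveWords s r, P w → P (w * (s⁻¹ * r ^ 2))) {w : G}
    (hw : w ∈ positiveWords s r) : P w := by
  induction hw using Submonoid.closure_induction_right with
  | one => exact one
  | mul_right w hw z hz ih =>
    rcases hz with rfl | rfl
    exacts [mul w hw ih, mul_sq w hw ih]

theorem commute_pow_three_of_mem_positiveWords (hrs : r ^ 3 = s ^ 2) {w : G}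
    (hw : w ∈ positiveWords s r) : Commute (r ^ 3) w := by
  have hs : Commute (r ^ 3) s⁻¹ := (hrs ▸ Commute.pow_self s 2 : Commute (r ^ 3) s).inv_right
  have hr : Commute (r ^ 3) r := Commute.pow_self r 3
  refine positiveWords_induction (Commute.one_right _) (fun w _ ih => ?_) (fun w _ ih => ?_) hw
  · exact ih.mul_right (hs.mul_right hr)
  · exact ih.mul_right (hs.mul_right (hr.pow_right 2))

/-- The elements `r ^ j * w` and `r ^ j * w * s` with `w` a positive word, a normal form in the
amalgam `⟨s, r ∣ s ^ 4 = 1, r ^ 3 = s ^ 2⟩`. -/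
def HasNormalForm (s r x : G) : Prop :=
  ∃ j : ℕ, ∃ w ∈ positiveWords s r, x = r ^ j * w ∨ x = r ^ j * w * s

theorem HasNormalForm.mul_s (hrs : r ^ 3 = s ^ 2) {x : G} (hx : HasNormalForm s r x) :
    HasNormalForm s r (x * s) := by
  obtain ⟨j, w, hw, rfl | rfl⟩ := hx
  · exact ⟨j, w, hw, Or.inr rfl⟩
  · refine ⟨j + 3, w, hw, Or.inl ?_⟩
    calc r ^ j * w * s * s = r ^ j * (w * s ^ 2) := by simp only [sq, mul_assoc]
      _ = r ^ j * (r ^ 3 * w) := by rw [← hrs, (commute_pow_three_of_mem_positiveWords hrs hw).eq]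
      _ = r ^ (j + 3) * w := by group

theorem HasNormalForm.mul_r (hrs : r ^ 3 = s ^ 2) {x : G}
    (hx : HasNormalForm s r x) : HasNormalForm s r (x * r) := by
  obtain ⟨j, w, hw, rfl | rfl⟩ := hx
  · refine positiveWords_induction (P := fun w => HasNormalForm s r (r ^ j * w * r)) ?_
      (fun w hw _ => ?_) (fun w hw _ => ?_) hw
    · exact ⟨j + 1, 1, one_mem _, Or.inl (by group)⟩
    · exact ⟨j, w * (s⁻¹ * r ^ 2), mul_sq_mem_positiveWords hw,
        Or.inl (by simp only [sq, mul_assoc])⟩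
    · refine ⟨j, w, hw, Or.inr ?_⟩
      calc r ^ j * (w * (s⁻¹ * r ^ 2)) * r = r ^ j * w * (s⁻¹ * r ^ 3) := by group
        _ = r ^ j * w * s := by rw [hrs]; group
  · refine ⟨j + 3, w * (s⁻¹ * r), mul_mem_positiveWords hw, Or.inl ?_⟩
    calc
      r ^ j * w * s * r = r ^ j * (w * s ^ 2) * (s⁻¹ * r) := by
        simp only [sq, mul_assoc, mul_inv_cancel_left]
      _ = r ^ j * (r ^ 3 * w) * (s⁻¹ * r) := by
        rw [← hrs, (commute_pow_three_of_mem_positiveWords hrs hw).eq]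
      _ = r ^ (j + 3) * (w * (s⁻¹ * r)) := by group

theorem pow_six_eq_one_of_relations (hs : s ^ 4 = 1) (hrs : r ^ 3 = s ^ 2) : r ^ 6 = 1 := by
  rw [show 6 = 3 * 2 from rfl, pow_mul, hrs, ← pow_mul, hs]

theorem hasNormalForm_of_closure_eq_top (hs : s ^ 4 = 1) (hrs : r ^ 3 = s ^ 2)
    (hgen : Subgroup.closure {s, r} = ⊤) (x : G) : HasNormalForm s r x := by
  have hfin : ∀ y ∈ ({s, r} : Set G), IsOfFinOrder y := by
    rintro y (rfl | rfl)
    · exact isOfFinOrder_iff_pow_eq_one.mpr ⟨4, by norm_num, hs⟩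
    · exact isOfFinOrder_iff_pow_eq_one.mpr ⟨6, by norm_num, pow_six_eq_one_of_relations hs hrs⟩
  have hx : x ∈ Submonoid.closure ({s, r} : Set G) := by
    rw [← Subgroup.closure_toSubmonoid_of_isOfFinOrder hfin, hgen]
    trivial
  induction hx using Submonoid.closure_induction_right with
  | one => exact ⟨0, 1, one_mem _, Or.inl (by group)⟩
  | mul_right y _ z hz ih =>
    rcases hz with rfl | rfl
    exacts [ih.mul_s hrs, ih.mul_r hrs]

theorem eq_one_or_isPositiveSL2_map {φ : G →* SL(2, ℤ)} (hφs : φ s = S) (hφr : φ r = S * T)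
    {w : G} (hw : w ∈ positiveWords s r) : w = 1 ∨ IsPositiveSL2 (φ w) := by
  have hT : φ (s⁻¹ * r) = T := by simp [hφs, hφr]
  have hU : φ (s⁻¹ * r ^ 2) = S⁻¹ * (S * T) ^ 2 := by
    simp only [map_mul, map_inv, map_pow, hφs, hφr]
  refine positiveWords_induction (P := fun w => w = 1 ∨ IsPositiveSL2 (φ w)) (Or.inl rfl)
    (fun w _ ih => Or.inr ?_) (fun w _ ih => Or.inr ?_) hw
  · rw [map_mul, hT]
    rcases ih with rfl | hA
    · simpa using isPositiveSL2_T
    · exact hA.mul_T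
  · rw [map_mul, hU]
    rcases ih with rfl | hA
    · simpa using isPositiveSL2_S_inv_mul
    · exact hA.mul_S_inv_mul

theorem injective_of_map_eq_S_of_map_eq_ST (hs : s ^ 4 = 1) (hrs : r ^ 3 = s ^ 2)
    (hgen : Subgroup.closure {s, r} = ⊤) {φ : G →* SL(2, ℤ)} (hφs : φ s = S)
    (hφr : φ r = S * T) : Function.Injective φ := by
  rw [injective_iff_map_eq_one]
  intro x hx
  obtain ⟨j, w, hw, hxw⟩ := hasNormalForm_of_closure_eq_top hs hrs hgen x
  obtain ⟨i, hji⟩ : ∃ i : Fin 6, r ^ j = r ^ (i : ℕ) :=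
    ⟨⟨j % 6, Nat.mod_lt _ (by norm_num)⟩,
      pow_eq_pow_mod j (pow_six_eq_one_of_relations hs hrs)⟩
  obtain ⟨k, hxk⟩ : ∃ k : Fin 2, x = r ^ (i : ℕ) * w * s ^ (k : ℕ) := by
    rw [hji] at hxw
    rcases hxw with h | h
    exacts [⟨0, by simpa using h⟩, ⟨1, by simpa using h⟩]
  have hφx : (S * T) ^ (i : ℕ) * φ w * S ^ (k : ℕ) = 1 := by
    rw [← hx, hxk, map_mul, map_mul, map_pow, map_pow, hφs, hφr]
  rcases eq_one_or_isPositiveSL2_map hφs hφr hw with rfl | hpos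
  · have hfinite : ∀ (i : Fin 6) (k : Fin 2),
        (S * T : SL(2, ℤ)) ^ (i : ℕ) * S ^ (k : ℕ) = 1 → i = 0 ∧ k = 0 := by decide
    rw [map_one, mul_one] at hφx
    obtain ⟨rfl, rfl⟩ := hfinite i k hφx
    simpa using hxk
  · have hfinite : ∀ (i : Fin 6) (k : Fin 2),
        ¬ IsPositiveSL2 (((S * T) ^ (i : ℕ))⁻¹ * (S ^ (k : ℕ))⁻¹) := by decide
    refine absurd hpos ?_
    rw [show φ w = ((S * T) ^ (i : ℕ))⁻¹ * (S ^ (k : ℕ))⁻¹ by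
      rw [eq_inv_mul_iff_mul_eq, eq_inv_iff_mul_eq_one, hφx]]
    exact hfinite i k

/-- The relations `s ^ 4 = 1` and `r ^ 3 = s ^ 2`, with `s` and `r` the generators `0` and `1`. -/
def modularRelations : Set (FreeGroup (Fin 2)) :=
  {FreeGroup.of 0 ^ 4, FreeGroup.of 1 ^ 3 * (FreeGroup.of 0 ^ 2)⁻¹}

theorem lift_modularRelations_eq_one (hs : s ^ 4 = 1) (hrs : r ^ 3 = s ^ 2) :
    ∀ x ∈ modularRelations, FreeGroup.lift ![s, r] x = 1 := by
  rintro x (rfl | rfl) <;> simp [hs, hrs]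

/-- The presentation `⟨s, r ∣ s ^ 4 = 1, r ^ 3 = s ^ 2⟩` of the modular group, with `s = S` and
`r = S * T`. -/
noncomputable def presentedGroupToSL2 : PresentedGroup modularRelations →* SL(2, ℤ) :=
  PresentedGroup.toGroup
    (lift_modularRelations_eq_one (s := S) (r := S * T) (by decide) (by decide))

theorem presentedGroupToSL2_of_zero : presentedGroupToSL2 (.of 0) = S :=
  PresentedGroup.toGroup.of (lift_modularRelations_eq_one (by decide) (by decide))

theorem presentedGroupToSL2_of_one : presentedGroupToSL2 (.of 1) = S * T :=
  PresentedGroup.toGroup.of (lift_modularRelations_eq_one (by decide) (by decide))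

theorem presentedGroupToSL2_bijective : Function.Bijective presentedGroupToSL2 := by
  refine ⟨injective_of_map_eq_S_of_map_eq_ST ?_ ?_ ?_ presentedGroupToSL2_of_zero
    presentedGroupToSL2_of_one, ?_⟩
  · exact PresentedGroup.one_of_mem (Or.inl rfl)
  · exact PresentedGroup.mk_eq_mk_of_mul_inv_mem (Or.inr rfl)
  · rw [← PresentedGroup.closure_range_of modularRelations]
    congr 1
    ext x
    simp [Fin.exists_fin_two, eq_comm]
  · rw [← MonoidHom.range_eq_top, eq_top_iff, ← SpecialLinearGroup.SL2Z_generators,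
      Subgroup.closure_le]
    rintro x (rfl | rfl)
    · exact ⟨.of 0, presentedGroupToSL2_of_zero⟩
    · exact ⟨(.of 0)⁻¹ * .of 1, by
        simp [presentedGroupToSL2_of_zero, presentedGroupToSL2_of_one]⟩

theorem exists_monoidHom_SL2 {s d : G} (hs : s ^ 4 = 1) (hsd : (s * d) ^ 3 = s ^ 2) :
    ∃ ρ : SL(2, ℤ) →* G, ρ S = s ∧ ρ T = d := by
  let e := MulEquiv.ofBijective presentedGroupToSL2 presentedGroupToSL2_bijective
  have hrel := lift_modularRelations_eq_one hs hsd
  let ρ : SL(2, ℤ) →* G := (PresentedGroup.toGroup hrel).comp e.symm.toMonoidHom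
  have hS : ρ S = s := by
    have : e.symm S = .of 0 := e.symm_apply_eq.mpr presentedGroupToSL2_of_zero.symm
    exact (congrArg _ this).trans (PresentedGroup.toGroup.of hrel)
  have hST : ρ (S * T) = s * d := by
    have : e.symm (S * T) = .of 1 := e.symm_apply_eq.mpr presentedGroupToSL2_of_one.symm
    exact (congrArg _ this).trans (PresentedGroup.toGroup.of hrel)
  exact ⟨ρ, hS, mul_left_cancel (a := s) (by rw [← hST, map_mul, hS])⟩

theorem exists_monoidHom_SL2_units {A : Type*} [Ring A] {s d : A} (hs : s * s = -1)
    (hd : d * s * d = s + d) :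
    ∃ ρ : SL(2, ℤ) →* Aˣ, (ρ T : A) = d := by
  let su : Aˣ := ⟨s, -s, by simp [hs], by simp [hs]⟩
  let du : Aˣ := ⟨d, s - s * d * s,
    by rw [mul_sub, ← mul_assoc, ← mul_assoc, hd, add_mul, hs]; abel,
    by rw [sub_mul, mul_assoc, mul_assoc, ← mul_assoc d, hd, mul_add, hs]; abel⟩
  have hsu : su ^ 4 = 1 := Units.ext (by
    simp [su, show s ^ 4 = s * s * (s * s) by noncomm_ring, hs])
  have hsdu : (su * du) ^ 3 = su ^ 2 := Units.ext (by
    calc (s * d) ^ 3 = s * (d * s * d) * s * d := by noncomm_ring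
      _ = s * (s + d) * s * d := by rw [hd]
      _ = s * s * (s * d) + s * (d * s * d) := by noncomm_ring
      _ = s ^ 2 := by rw [hd, mul_add, hs, sq, hs]; noncomm_ring)
  obtain ⟨ρ, -, hρ⟩ := exists_monoidHom_SL2 hsu hsdu
  exact ⟨ρ, congrArg Units.val hρ⟩

end Presentation

section LocallyNilpotent

variable {R E F : Type*} [CommRing R] [AddCommGroup E] [Module R E] [AddCommGroup F] [Module R F]

/-- Local nilpotence of an endomorphism: each vector is killed by some power. On such endomorphisms
the geometric series makes sense pointwise. -/
def IsLocallyNilpotent (N : Module.End R E) : Prop :=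
  ∀ v, ∃ k, (N ^ k) v = 0

namespace IsLocallyNilpotent

variable {N : Module.End R E}

theorem pow_apply_eq_zero {v : E} {k l : ℕ} (hk : (N ^ k) v = 0) (hkl : k ≤ l) :
    (N ^ l) v = 0 := by
  rw [← Nat.sub_add_cancel hkl, pow_add, Module.End.mul_apply, hk, map_zero]

theorem hasFiniteSupport_geometric (hN : IsLocallyNilpotent N) (π : E →ₗ[R] F)
    (σ : Module.End R F) (v : E) :
    (Function.support fun k : ℕ => (σ ^ k) (π ((N ^ k) v))).Finite := by
  obtain ⟨k, hk⟩ := hN v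
  refine (Set.finite_Iio k).subset fun l hl => Set.mem_Iio.mpr (lt_of_not_ge fun hkl => hl ?_)
  simp only [pow_apply_eq_zero hk hkl, map_zero]

/-- The sum `∑ k, σ ^ k * π * N ^ k`, a finite sum on each vector. -/
noncomputable def geometricSum (hN : IsLocallyNilpotent N) (π : E →ₗ[R] F)
    (σ : Module.End R F) : E →ₗ[R] F where
  toFun v := ∑ᶠ k : ℕ, (σ ^ k) (π ((N ^ k) v))
  map_add' v w := by
    simp only [map_add]
    exact finsum_add_distrib (hN.hasFiniteSupport_geometric π σ v)
      (hN.hasFiniteSupport_geometric π σ w)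
  map_smul' a v := by
    simp only [map_smul, RingHom.id_apply]
    exact (smul_finsum' a (hN.hasFiniteSupport_geometric π σ v)).symm

theorem geometricSum_apply (hN : IsLocallyNilpotent N) (π : E →ₗ[R] F) (σ : Module.End R F) {v : E}
    {k : ℕ} (hk : (N ^ k) v = 0) :
    hN.geometricSum π σ v = ∑ l ∈ Finset.range k, (σ ^ l) (π ((N ^ l) v)) := by
  refine finsum_eq_sum_of_support_subset _ fun l hl => ?_
  simp only [Finset.coe_range, Set.mem_Iio]
  refine lt_of_not_ge fun hkl => hl ?_
  simp only [pow_apply_eq_zero hk hkl, map_zero]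

theorem geometricSum_eq (hN : IsLocallyNilpotent N) (π : E →ₗ[R] F) (σ : Module.End R F) :
    hN.geometricSum π σ = π + σ ∘ₗ hN.geometricSum π σ ∘ₗ N := by
  ext v
  obtain ⟨k, hk⟩ := hN v
  have hk' : (N ^ (k + 1)) v = 0 := pow_apply_eq_zero hk k.le_succ
  have hNk : (N ^ k) (N v) = 0 := by rwa [pow_succ] at hk'
  rw [geometricSum_apply hN π σ hk', Finset.sum_range_succ', LinearMap.add_apply, add_comm]
  simp only [LinearMap.comp_apply, geometricSum_apply hN π σ hNk, map_sum, pow_zero, pow_succ' σ,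
    pow_succ N, Module.End.mul_apply, Module.End.one_apply]

theorem eq_geometricSum (hN : IsLocallyNilpotent N) {π Ξ : E →ₗ[R] F} {σ : Module.End R F}
    (hΞ : Ξ = π + σ ∘ₗ Ξ ∘ₗ N) : Ξ = hN.geometricSum π σ := by
  rw [← sub_eq_zero]
  set Δ := Ξ - hN.geometricSum π σ with hΔ
  have hstep : ∀ v, Δ v = σ (Δ (N v)) := fun v => by
    have h₁ := LinearMap.congr_fun hΞ v
    have h₂ := LinearMap.congr_fun (hN.geometricSum_eq π σ) v
    simp only [LinearMap.add_apply, LinearMap.comp_apply] at h₁ h₂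
    rw [hΔ, LinearMap.sub_apply, h₁, h₂, LinearMap.sub_apply, map_sub, add_sub_add_left_eq_sub]
  have hpow : ∀ k v, (N ^ k) v = 0 → Δ v = 0 := fun k => by
    induction k with
    | zero => exact fun v hv => by rw [show v = 0 from hv, map_zero]
    | succ k ih => exact fun v hv => by rw [hstep, ih (N v) (by rwa [pow_succ] at hv), map_zero]
  ext v
  obtain ⟨k, hk⟩ := hN v
  exact hpow k v hk

theorem existsUnique (hN : IsLocallyNilpotent N) (π : E →ₗ[R] F) (σ : Module.End R F) :
    ∃! Ξ : E →ₗ[R] F, Ξ = π + σ ∘ₗ Ξ ∘ₗ N :=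
  ⟨hN.geometricSum π σ, hN.geometricSum_eq π σ, fun _ => hN.eq_geometricSum⟩

theorem isUnit_one_sub (hN : IsLocallyNilpotent N) : IsUnit (1 - N) := by
  refine (Module.End.isUnit_iff _).mpr ⟨?_, fun v => ?_⟩
  · refine (injective_iff_map_eq_zero _).mpr fun v hv => ?_
    obtain ⟨k, hk⟩ := hN v
    calc v = (1 - N ^ k) v := by rw [LinearMap.sub_apply, hk, sub_zero, Module.End.one_apply]
      _ = 0 := by rw [← geom_sum_mul_neg, Module.End.mul_apply, hv, map_zero]
  · obtain ⟨k, hk⟩ := hN v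
    refine ⟨(∑ i ∈ Finset.range k, N ^ i) v, ?_⟩
    rw [← Module.End.mul_apply, mul_neg_geom_sum, LinearMap.sub_apply, hk, sub_zero,
      Module.End.one_apply]

theorem of_wellFounded {ι : Type*} [LT ι] [WellFoundedLT ι] {M : Module.End R (ι →₀ R)}
    (hM : ∀ i j, M (.single j 1) i ≠ 0 → i < j) : IsLocallyNilpotent M := by
  set K : Submodule R (ι →₀ R) := ⨆ k, M.iterateKer k
  have hK : ∀ v, v ∈ K ↔ ∃ k, (M ^ k) v = 0 := fun v =>
    Submodule.mem_iSup_of_directed _ M.iterateKer.monotone.directed_le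
  have hspan : ∀ v : ι →₀ R, (∀ i ∈ v.support, .single i 1 ∈ K) → v ∈ K := fun v hv => by
    rw [← v.sum_single]
    refine K.sum_mem fun i hi => ?_
    rw [← mul_one (v i), ← smul_eq_mul, ← Finsupp.smul_single]
    exact K.smul_mem _ (hv i hi)
  have hbasis : ∀ j, (.single j 1 : ι →₀ R) ∈ K := fun j => by
    induction j using WellFoundedLT.induction with
    | ind j ih =>
      have hMj := hspan (M (.single j 1)) fun i hi => ih i (hM i j (Finsupp.mem_support_iff.mp hi))
      obtain ⟨k, hk⟩ := (hK _).mp hMj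
      exact (hK _).mpr ⟨k + 1, by rwa [pow_succ, Module.End.mul_apply]⟩
  exact fun v => (hK v).mp (hspan v fun i _ => hbasis i)

end IsLocallyNilpotent

end LocallyNilpotent

theorem IsLocallyNilpotent.seminorm_le {R E F : Type*} [NormedCommRing R] [AddCommGroup E]
    [Module R E] [AddCommGroup F] [Module R F] {N : Module.End R E} (hN : IsLocallyNilpotent N)
    {π Ξ : E →ₗ[R] F} {σ : Module.End R F} (hΞ : Ξ = π + σ ∘ₗ Ξ ∘ₗ N) (p : Seminorm R F)
    (q : Seminorm R E) {B K ε : ℝ} (hB : 0 ≤ B) (hK : 0 ≤ K) (hKε : K * ε ≤ 1 / 2)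
    (hπ : ∀ v, p (π v) ≤ B * q v) (hσ : ∀ v, p (σ v) ≤ K * p v) (hNq : ∀ v, q (N v) ≤ ε * q v)
    (v : E) : p (Ξ v) ≤ 2 * B * q v := by
  obtain ⟨k, hk⟩ := hN v
  induction k generalizing v with
  | zero =>
    rw [show v = 0 from hk]
    simp
  | succ k ih =>
    have hv : Ξ v = π v + σ (Ξ (N v)) := LinearMap.congr_fun hΞ v
    calc p (Ξ v) ≤ p (π v) + p (σ (Ξ (N v))) := by rw [hv]; exact map_add_le_add p _ _
      _ ≤ B * q v + K * (2 * B * (ε * q v)) := by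
        gcongr
        · exact hπ v
        · refine (hσ _).trans ?_
          gcongr
          refine (ih (N v) (by rwa [pow_succ] at hk)).trans ?_
          gcongr
          exact hNq v
      _ = B * q v * (1 + 2 * (K * ε)) := by ring
      _ ≤ B * q v * 2 := by
        have := apply_nonneg q v
        gcongr
        linarith
      _ = 2 * B * q v := by ring

section Intertwiner

/-- An element `Ξ` conjugating `N` into `N'`, normalized to be congruent to `1` modulo the right
ideal generated by `V`. -/
def IsNormalizedIntertwiner {A : Type*} [Ring A] (V N N' Ξ : A) : Prop :=
  SemiconjBy Ξ N N' ∧ V ∣ Ξ - 1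

namespace IsNormalizedIntertwiner

section Ring

variable {A : Type*} [Ring A] {V N N' N'' Ξ Ξ' : A}

theorem one (V N : A) : IsNormalizedIntertwiner V N N 1 :=
  ⟨.one_left N, by rw [sub_self]; exact dvd_zero V⟩

theorem mul (hΞ' : IsNormalizedIntertwiner V N' N'' Ξ') (hΞ : IsNormalizedIntertwiner V N N' Ξ) :
    IsNormalizedIntertwiner V N N'' (Ξ' * Ξ) := by
  refine ⟨hΞ'.1.mul_left hΞ.1, ?_⟩
  rw [show Ξ' * Ξ - 1 = (Ξ' - 1) * Ξ + (Ξ - 1) by noncomm_ring]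
  exact dvd_add (hΞ'.2.mul_right Ξ) hΞ.2

theorem iff_eq_add_mul (u : Aˣ) (hu : u = N' * V) :
    IsNormalizedIntertwiner V N N' Ξ ↔ Ξ = (1 - V * ↑u⁻¹ * N') + V * ↑u⁻¹ * (Ξ * N) := by
  constructor
  · rintro ⟨hΞ, W, hW⟩
    have hW' : W = ↑u⁻¹ * (Ξ * N - N') := by
      rw [Units.eq_inv_mul_iff_mul_eq, hu, mul_assoc, ← hW, mul_sub, hΞ.eq, mul_one]
    calc Ξ = V * (↑u⁻¹ * (Ξ * N - N')) + 1 := by rw [← hW', ← hW, sub_add_cancel]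
      _ = _ := by noncomm_ring
  · intro hΞ
    have hdvd : Ξ - 1 = V * (↑u⁻¹ * (Ξ * N - N')) := by
      nth_rw 1 [hΞ]
      noncomm_ring
    refine ⟨?_, _, hdvd⟩
    have : N' * (Ξ - 1) = Ξ * N - N' := by
      rw [hdvd, ← mul_assoc, ← hu, Units.mul_inv_cancel_left]
    rw [mul_sub, mul_one, sub_left_inj] at this
    exact this.symm

end Ring

variable {R E : Type*} [CommRing R] [AddCommGroup E] [Module R E] {V N N' Ξ Ξ' : Module.End R E}

theorem existsUnique (hN : IsLocallyNilpotent N) (hV : IsUnit (N' * V)) :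
    ∃! Ξ, IsNormalizedIntertwiner V N N' Ξ := by
  obtain ⟨u, hu⟩ := hV
  simp only [iff_eq_add_mul u hu]
  exact hN.existsUnique _ _

theorem mul_eq_one (hN : IsLocallyNilpotent N) (hV : IsUnit (N * V))
    (hΞ : IsNormalizedIntertwiner V N N' Ξ) (hΞ' : IsNormalizedIntertwiner V N' N Ξ') :
    Ξ' * Ξ = 1 :=
  (existsUnique hN hV).unique (hΞ'.mul hΞ) (one V N)

end IsNormalizedIntertwiner

end Intertwiner

section Weight

open Filter Finset

variable {R : Type*} [NormedCommRing R] [NormMulClass R]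

/-- The weighted `ℓ¹`-seminorm `v ↦ ∑ ‖vᵢ‖ i ^ c`. -/
noncomputable def weight (c : ℕ) : Seminorm R (ℕ+ →₀ R) :=
  Seminorm.of (fun v => v.sum fun i x => ‖x‖ * ((i : ℕ) : ℝ) ^ c)
    (fun v w => by
      classical
      rw [v.sum_of_support_subset (subset_union_left (s₂ := w.support)) _ (by simp),
        w.sum_of_support_subset (subset_union_right (s₁ := v.support)) _ (by simp),
        (v + w).sum_of_support_subset Finsupp.support_add _ (by simp), ← sum_add_distrib]
      refine sum_le_sum fun i _ => ?_
      rw [← add_mul]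
      gcongr
      exact norm_add_le _ _)
    (fun a v => by
      rw [Finsupp.sum_of_support_subset _ Finsupp.support_smul _ (by simp), Finsupp.sum, mul_sum]
      exact sum_congr rfl fun i _ => by rw [Finsupp.smul_apply, norm_smul, mul_assoc])

theorem weight_apply (c : ℕ) (v : ℕ+ →₀ R) :
    weight c v = v.sum fun i x => ‖x‖ * ((i : ℕ) : ℝ) ^ c :=
  rfl

theorem weight_single (c : ℕ) (n : ℕ+) (x : R) :
    weight c (.single n x) = ‖x‖ * ((n : ℕ) : ℝ) ^ c := by
  rw [weight_apply, Finsupp.sum_single_index (by simp)]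

theorem weight_mono (v : ℕ+ →₀ R) : Monotone fun c => weight c v := fun c c' h =>
  sum_le_sum fun i _ => by
    dsimp only
    gcongr
    exact_mod_cast i.pos

theorem norm_apply_mul_pow_le_weight (c : ℕ) (v : ℕ+ →₀ R) (i : ℕ+) :
    ‖v i‖ * ((i : ℕ) : ℝ) ^ c ≤ weight c v := by
  by_cases hi : i ∈ v.support
  · exact single_le_sum (f := fun i : ℕ+ => ‖v i‖ * ((i : ℕ) : ℝ) ^ c)
      (fun i _ => by positivity) hi
  · rw [Finsupp.notMem_support_iff.mp hi, norm_zero, zero_mul]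
    exact apply_nonneg _ _

theorem weight_map_le {L : Module.End R (ℕ+ →₀ R)} {c c' : ℕ} {K : ℝ}
    (hL : ∀ n : ℕ+, weight c (L (.single n 1)) ≤ K * ((n : ℕ) : ℝ) ^ c') (v : ℕ+ →₀ R) :
    weight c (L v) ≤ K * weight c' v := by
  have hv : L v = ∑ i ∈ v.support, v i • L (.single i 1) := by
    simp_rw [← map_smul, ← map_sum, Finsupp.smul_single_one]
    exact congrArg L v.sum_single.symm
  calc weight c (L v) ≤ ∑ i ∈ v.support, weight c (v i • L (.single i 1)) := by
        rw [hv]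
        exact le_sum_of_subadditive _ (map_zero _).le (map_add_le_add _) _ _
    _ ≤ ∑ i ∈ v.support, K * (‖v i‖ * ((i : ℕ) : ℝ) ^ c') := sum_le_sum fun i _ => by
        rw [map_smul_eq_mul, mul_left_comm]
        gcongr
        exact hL i
    _ = K * weight c' v := by rw [← mul_sum, weight_apply, Finsupp.sum]

/-- Boundedness of `L` by `K`, from the seminorm `weight c'` to the seminorm `weight c`. -/
def IsWeightBounded (c c' : ℕ) (K : ℝ) (L : Module.End R (ℕ+ →₀ R)) : Prop :=
  ∀ v, weight c (L v) ≤ K * weight c' v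

namespace IsWeightBounded

variable {c c' c'' : ℕ} {K K' : ℝ} {L L' : Module.End R (ℕ+ →₀ R)}

theorem zero (c : ℕ) : IsWeightBounded c c 0 (0 : Module.End R (ℕ+ →₀ R)) := fun v => by simp

theorem one (c : ℕ) : IsWeightBounded c c 1 (1 : Module.End R (ℕ+ →₀ R)) := fun _ =>
  (one_mul _).ge

theorem add (hL : IsWeightBounded c c' K L) (hL' : IsWeightBounded c c' K' L') :
    IsWeightBounded c c' (K + K') (L + L') := fun v =>
  calc weight c (L v + L' v) ≤ weight c (L v) + weight c (L' v) := map_add_le_add _ _ _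
    _ ≤ K * weight c' v + K' * weight c' v := add_le_add (hL v) (hL' v)
    _ = (K + K') * weight c' v := (add_mul _ _ _).symm

theorem neg (hL : IsWeightBounded c c' K L) : IsWeightBounded c c' K (-L) := fun v => by
  rw [LinearMap.neg_apply, map_neg_eq_map]
  exact hL v

theorem sub (hL : IsWeightBounded c c' K L) (hL' : IsWeightBounded c c' K' L') :
    IsWeightBounded c c' (K + K') (L - L') := fun v =>
  calc weight c (L v - L' v) ≤ weight c (L v) + weight c (L' v) := map_sub_le_add _ _ _
    _ ≤ K * weight c' v + K' * weight c' v := add_le_add (hL v) (hL' v)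
    _ = (K + K') * weight c' v := (add_mul _ _ _).symm

theorem mul (hL : IsWeightBounded c c' K L) (hK : 0 ≤ K) (hL' : IsWeightBounded c' c'' K' L') :
    IsWeightBounded c c'' (K * K') (L * L') := fun v =>
  calc weight c (L (L' v)) ≤ K * weight c' (L' v) := hL _
    _ ≤ K * (K' * weight c'' v) := by gcongr; exact hL' v
    _ = K * K' * weight c'' v := (mul_assoc _ _ _).symm

theorem mono (hL : IsWeightBounded c c' K L) (hKK' : K ≤ K') : IsWeightBounded c c' K' L :=
  fun v => (hL v).trans (by gcongr)

theorem mono_left (hL : IsWeightBounded c c'' K L) (hc : c' ≤ c) : IsWeightBounded c' c'' K L :=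
  fun v => (weight_mono _ hc).trans (hL v)

theorem mono_right (hL : IsWeightBounded c c' K L) (hK : 0 ≤ K) (hc : c' ≤ c'') :
    IsWeightBounded c c'' K L :=
  fun v => (hL v).trans (mul_le_mul_of_nonneg_left (weight_mono v hc) hK)

end IsWeightBounded

/-- The endomorphisms bounded from some seminorm `weight c'` to `weight c`, for each `c`. Those with
matrix entries in `ℂ` are the matrices acting on polynomially bounded sequences by the transpose. -/
def moderateEnd (R : Type*) [NormedCommRing R] [NormMulClass R] :
    Subring (Module.End R (ℕ+ →₀ R)) where
  carrier := {L | ∀ c, ∃ c' K, 0 ≤ K ∧ IsWeightBounded c c' K L}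
  zero_mem' c := ⟨c, 0, le_rfl, .zero c⟩
  one_mem' c := ⟨c, 1, zero_le_one, .one c⟩
  add_mem' {L L'} hL hL' c := by
    obtain ⟨c₁, K₁, hK₁, h₁⟩ := hL c
    obtain ⟨c₂, K₂, hK₂, h₂⟩ := hL' c
    exact ⟨max c₁ c₂, K₁ + K₂, by positivity,
      (h₁.mono_right hK₁ (le_max_left _ _)).add (h₂.mono_right hK₂ (le_max_right _ _))⟩
  neg_mem' {L} hL c := by
    obtain ⟨c', K, hK, h⟩ := hL c
    exact ⟨c', K, hK, h.neg⟩
  mul_mem' {L L'} hL hL' c := by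
    obtain ⟨c₁, K₁, hK₁, h₁⟩ := hL c
    obtain ⟨c₂, K₂, hK₂, h₂⟩ := hL' c₁
    exact ⟨c₂, K₁ * K₂, by positivity, h₁.mul hK₁ h₂⟩

theorem mem_moderateEnd_of_eventually {L : Module.End R (ℕ+ →₀ R)}
    (hL : ∀ᶠ c in atTop, ∃ c' K, 0 ≤ K ∧ IsWeightBounded c c' K L) : L ∈ moderateEnd R := by
  intro c
  obtain ⟨a, ⟨c', K, hK, h⟩, hca⟩ := (hL.and (eventually_ge_atTop c)).exists
  exact ⟨c', K, hK, h.mono_left hca⟩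

/-- The endomorphisms bounded on the seminorms `weight c` for all large `c`, uniformly in `c`. -/
def uniformlyBoundedEnd (R : Type*) [NormedCommRing R] [NormMulClass R] :
    Subring (Module.End R (ℕ+ →₀ R)) where
  carrier := {L | ∃ K, 0 ≤ K ∧ ∀ᶠ c in atTop, IsWeightBounded c c K L}
  zero_mem' := ⟨0, le_rfl, .of_forall .zero⟩
  one_mem' := ⟨1, zero_le_one, .of_forall .one⟩
  add_mem' := by
    rintro L L' ⟨K, hK, h⟩ ⟨K', hK', h'⟩
    exact ⟨K + K', by positivity, (h.and h').mono fun c hc => hc.1.add hc.2⟩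
  neg_mem' := by
    rintro L ⟨K, hK, h⟩
    exact ⟨K, hK, h.mono fun c hc => hc.neg⟩
  mul_mem' := by
    rintro L L' ⟨K, hK, h⟩ ⟨K', hK', h'⟩
    exact ⟨K * K', by positivity, (h.and h').mono fun c hc => hc.1.mul hK hc.2⟩

theorem uniformlyBoundedEnd_le_moderateEnd : uniformlyBoundedEnd R ≤ moderateEnd R := by
  rintro L ⟨K, hK, h⟩
  exact mem_moderateEnd_of_eventually (h.mono fun c hc => ⟨c, K, hK, hc⟩)

/-- Endomorphisms whose norm on the seminorm `weight c` tends to `0` as `c` tends to infinity. -/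
def IsContracting (M : Module.End R (ℕ+ →₀ R)) : Prop :=
  ∀ ε : ℝ, 0 < ε → ∀ᶠ c in atTop, IsWeightBounded c c ε M

namespace IsContracting

variable {M L : Module.End R (ℕ+ →₀ R)}

theorem mem_uniformlyBoundedEnd (hM : IsContracting M) : M ∈ uniformlyBoundedEnd R :=
  ⟨1, zero_le_one, hM 1 one_pos⟩

theorem neg (hM : IsContracting M) : IsContracting (-M) := fun ε hε =>
  (hM ε hε).mono fun _ hc => hc.neg

theorem mul (hM : IsContracting M) (hL : L ∈ uniformlyBoundedEnd R) : IsContracting (M * L) := by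
  intro ε hε
  obtain ⟨K, hK, h⟩ := hL
  filter_upwards [hM (ε / (K + 1)) (by positivity), h] with c hMc hLc
  refine (hMc.mul (by positivity) hLc).mono ?_
  rw [div_mul_eq_mul_div, div_le_iff₀ (by positivity)]
  gcongr
  linarith

theorem inv_mem_uniformlyBoundedEnd {u : (Module.End R (ℕ+ →₀ R))ˣ}
    (hu : IsContracting ((u : Module.End R (ℕ+ →₀ R)) - 1)) :
    (↑u⁻¹ : Module.End R (ℕ+ →₀ R)) ∈ uniformlyBoundedEnd R := by
  refine ⟨2, zero_le_two, (hu (1 / 2) (by norm_num)).mono fun c hc v => ?_⟩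
  set w := (↑u⁻¹ : Module.End R (ℕ+ →₀ R)) v
  have hw : w = v - ((u : Module.End R (ℕ+ →₀ R)) - 1) w := by
    rw [LinearMap.sub_apply, Module.End.one_apply, ← Module.End.mul_apply, Units.mul_inv,
      Module.End.one_apply, sub_sub_cancel]
  have hsub : weight c w ≤ weight c v + weight c (((u : Module.End R (ℕ+ →₀ R)) - 1) w) :=
    (congrArg (weight c) hw).trans_le (map_sub_le_add _ _ _)
  linarith [hc w]

variable [NormOneClass R]

theorem lt_of_apply_single_ne_zero (hM : IsContracting M) {i j : ℕ+}
    (hij : M (.single j 1) i ≠ 0) : i < j := by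
  by_contra! hji
  have hpos : 0 < ‖M (.single j 1) i‖ := norm_pos_iff.mpr hij
  obtain ⟨c, hc⟩ := (hM (‖M (.single j 1) i‖ / 2) (by positivity)).exists
  have hle : ‖M (.single j 1) i‖ * ((i : ℕ) : ℝ) ^ c
      ≤ ‖M (.single j 1) i‖ / 2 * ((i : ℕ) : ℝ) ^ c :=
    calc _ ≤ weight c (M (.single j 1)) := norm_apply_mul_pow_le_weight c _ i
      _ ≤ ‖M (.single j 1) i‖ / 2 * ((j : ℕ) : ℝ) ^ c := by
        simpa only [weight_single, norm_one, one_mul] using hc (.single j 1)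
      _ ≤ _ := by
        gcongr
        exact_mod_cast hji
  have := le_of_mul_le_mul_right hle (pow_pos (Nat.cast_pos.mpr i.pos) c)
  linarith

theorem isLocallyNilpotent (hM : IsContracting M) : IsLocallyNilpotent M :=
  .of_wellFounded fun _ _ => hM.lt_of_apply_single_ne_zero

theorem exists_isWeightBounded_of_eq_add_mul (hM : IsContracting M)
    {π σ Ξ : Module.End R (ℕ+ →₀ R)} (hΞ : Ξ = π + σ * (Ξ * M)) {c : ℕ} {B K : ℝ} (hB : 0 ≤ B)
    (hK : 0 ≤ K) (hπ : IsWeightBounded c c B π) (hσ : IsWeightBounded c c K σ) :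
    ∃ c', IsWeightBounded c c' (2 * B) Ξ := by
  obtain ⟨c', hMc', hcc'⟩ := ((hM (1 / (2 * (K + 1))) (by positivity)).and
    (eventually_ge_atTop c)).exists
  have hε : K * (1 / (2 * (K + 1))) ≤ 1 / 2 := by
    rw [mul_one_div, div_le_div_iff₀ (by positivity) (by positivity)]
    linarith
  exact ⟨c', hM.isLocallyNilpotent.seminorm_le hΞ (weight c) (weight c') hB hK hε
    (hπ.mono_right hB hcc') hσ hMc'⟩

end IsContracting

end Weight

section Doubling

open Filter Finset

/-- The map `e_n ↦ e_{2n}`. -/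
noncomputable def doubling (R : Type*) [CommRing R] : Module.End R (ℕ+ →₀ R) :=
  Finsupp.lmapDomain R R (2 * ·)

/-- The left inverse of `doubling` with `e_{2n} ↦ e_n` and `e_n ↦ 0` for odd `n`. -/
noncomputable def halving (R : Type*) [CommRing R] : Module.End R (ℕ+ →₀ R) :=
  Finsupp.lcomapDomain (2 * ·) (mul_right_injective (2 : ℕ+))

section

variable {R : Type*} [CommRing R]

theorem doubling_single (n : ℕ+) (x : R) : doubling R (.single n x) = .single (2 * n) x :=
  Finsupp.mapDomain_single

theorem halving_apply (v : ℕ+ →₀ R) (i : ℕ+) : halving R v i = v (2 * i) :=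
  rfl

theorem halving_doubling (v : ℕ+ →₀ R) : halving R (doubling R v) = v := by
  ext i
  exact Finsupp.mapDomain_apply (mul_right_injective (2 : ℕ+)) v i

end

variable {R : Type*} [NormedCommRing R] [NormMulClass R]

theorem isWeightBounded_doubling [NormOneClass R] (c : ℕ) :
    IsWeightBounded c c (2 ^ c) (doubling R) :=
  weight_map_le fun n => by
    rw [doubling_single, weight_single, norm_one, one_mul, PNat.mul_coe, Nat.cast_mul, mul_pow]
    rfl

theorem isWeightBounded_halving (c : ℕ) : IsWeightBounded c c ((1 / 2) ^ c) (halving R) :=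
  fun v => by
    set f : ℕ+ → ℝ := fun i => ‖v i‖ * ((i : ℕ) : ℝ) ^ c
    have hinj : Set.InjOn (fun i : ℕ+ => 2 * i) (halving R v).support :=
      (mul_right_injective (2 : ℕ+)).injOn
    calc weight c (halving R v) = ∑ i ∈ (halving R v).support, (1 / 2) ^ c * f (2 * i) :=
          sum_congr rfl fun i _ => by
            simp only [f, halving_apply, PNat.mul_coe, Nat.cast_mul, mul_pow]
            rw [mul_left_comm, ← mul_assoc ((1 / 2 : ℝ) ^ c), ← mul_pow]
            norm_num
      _ = (1 / 2) ^ c * ∑ i ∈ (halving R v).support.image (2 * ·), f i := by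
          rw [sum_image hinj, mul_sum]
      _ ≤ (1 / 2) ^ c * weight c v := by
          refine mul_le_mul_of_nonneg_left (sum_le_sum_of_subset_of_nonneg ?_ ?_) (by positivity)
          · intro i hi
            obtain ⟨j, hj, rfl⟩ := mem_image.mp hi
            simpa [halving_apply] using hj
          · exact fun i _ _ => by positivity

theorem isContracting_halving : IsContracting (halving R) := fun ε hε => by
  have htendsto := tendsto_pow_atTop_nhds_zero_of_lt_one (r := (1 / 2 : ℝ)) (by norm_num)
    (by norm_num)
  filter_upwards [htendsto.eventually_le_const hε] with c hc
  exact (isWeightBounded_halving c).mono hc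

theorem doubling_mem_moderateEnd [NormOneClass R] : doubling R ∈ moderateEnd R := fun c =>
  ⟨c, 2 ^ c, by positivity, isWeightBounded_doubling c⟩

/-- Approximate left inverses of `doubling`: both the endomorphism and its error term are
contracting. -/
structure IsApproxHalving (N : Module.End R (ℕ+ →₀ R)) : Prop where
  isContracting : IsContracting N
  isContracting_mul_doubling_sub_one : IsContracting (N * doubling R - 1)

namespace IsApproxHalving

variable [NormOneClass R] {N N' Ξ : Module.End R (ℕ+ →₀ R)}

theorem isUnit_mul_doubling (hN : IsApproxHalving N) : IsUnit (N * doubling R) := by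
  have := hN.isContracting_mul_doubling_sub_one.neg.isLocallyNilpotent.isUnit_one_sub
  rwa [show 1 - -(N * doubling R - 1) = N * doubling R by abel] at this

theorem intertwiner_mem_moderateEnd (hN : IsApproxHalving N) (hN' : IsApproxHalving N')
    (hΞ : IsNormalizedIntertwiner (doubling R) N N' Ξ) : Ξ ∈ moderateEnd R := by
  obtain ⟨u, hu⟩ := hN'.isUnit_mul_doubling
  have hu' : IsContracting ((u : Module.End R (ℕ+ →₀ R)) - 1) := by
    rw [hu]
    exact hN'.isContracting_mul_doubling_sub_one
  obtain ⟨K, hK, hinv⟩ := hu'.inv_mem_uniformlyBoundedEnd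
  refine mem_moderateEnd_of_eventually ?_
  filter_upwards [hinv, hN'.isContracting 1 one_pos] with c hinvc hN'c
  have hσ := (isWeightBounded_doubling c).mul (by positivity) hinvc
  have hσK : 0 ≤ 2 ^ c * K := by positivity
  have hπ := (IsWeightBounded.one c).sub (hσ.mul hσK hN'c)
  have hπK : 0 ≤ 1 + 2 ^ c * K * 1 := by positivity
  have hfix := (IsNormalizedIntertwiner.iff_eq_add_mul u hu).mp hΞ
  obtain ⟨c', hc'⟩ :=
    hN.isContracting.exists_isWeightBounded_of_eq_add_mul hfix hπK hσK hπ hσ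
  exact ⟨c', 2 * (1 + 2 ^ c * K * 1), mul_nonneg zero_le_two hπK, hc'⟩

theorem exists_unit_conj (hN : IsApproxHalving N) (hN' : IsApproxHalving N') :
    ∃ u : (moderateEnd R)ˣ, SemiconjBy u.1.1 N N' := by
  obtain ⟨Ξ, hΞ, -⟩ := IsNormalizedIntertwiner.existsUnique hN.isContracting.isLocallyNilpotent
    hN'.isUnit_mul_doubling
  obtain ⟨Ξ', hΞ', -⟩ := IsNormalizedIntertwiner.existsUnique hN'.isContracting.isLocallyNilpotent
    hN.isUnit_mul_doubling
  refine ⟨⟨⟨Ξ, hN.intertwiner_mem_moderateEnd hN' hΞ⟩, ⟨Ξ', hN'.intertwiner_mem_moderateEnd hN hΞ'⟩,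
    Subtype.ext ?_, Subtype.ext ?_⟩, hΞ.1⟩
  · exact hΞ'.mul_eq_one hN'.isContracting.isLocallyNilpotent hN'.isUnit_mul_doubling hΞ
  · exact hΞ.mul_eq_one hN.isContracting.isLocallyNilpotent hN.isUnit_mul_doubling hΞ'

end IsApproxHalving

end Doubling

section Model

open Filter Finset

/-- The projection onto the span of the `e_n` with `n` of odd `2`-adic valuation. -/
noncomputable def oddValuationPart (R : Type*) [CommRing R] : Module.End R (ℕ+ →₀ R) where
  toFun := Finsupp.filter fun n => Odd (padicValNat 2 n)
  map_add' _ _ := Finsupp.filter_add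
  map_smul' _ _ := Finsupp.filter_smul

section

variable {R : Type*} [CommRing R]

theorem oddValuationPart_apply (v : ℕ+ →₀ R) (i : ℕ+) :
    oddValuationPart R v i = if Odd (padicValNat 2 i) then v i else 0 :=
  Finsupp.filter_apply _ _ _

theorem oddValuationPart_single (n : ℕ+) (x : R) :
    oddValuationPart R (.single n x) = if Odd (padicValNat 2 n) then .single n x else 0 := by
  split_ifs with hn
  exacts [Finsupp.filter_single_of_pos _ hn, Finsupp.filter_single_of_neg _ hn]

theorem odd_padicValNat_two_mul (i : ℕ+) :
    Odd (padicValNat 2 (2 * i : ℕ+)) ↔ ¬ Odd (padicValNat 2 i) := by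
  rw [PNat.mul_coe, PNat.val_ofNat, padicValNat.mul two_ne_zero i.ne_zero,
    padicValNat.self one_lt_two, add_comm, Nat.odd_add_one]

theorem oddValuationPart_oddValuationPart (v : ℕ+ →₀ R) :
    oddValuationPart R (oddValuationPart R v) = oddValuationPart R v := by
  ext i
  simp only [oddValuationPart_apply]
  split_ifs <;> rfl

theorem oddValuationPart_halving (v : ℕ+ →₀ R) :
    oddValuationPart R (halving R v) = halving R v - halving R (oddValuationPart R v) := by
  ext i
  simp only [Finsupp.sub_apply, oddValuationPart_apply, halving_apply, odd_padicValNat_two_mul]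
  split_ifs <;> simp

theorem oddValuationPart_doubling (v : ℕ+ →₀ R) :
    oddValuationPart R (doubling R v) = doubling R v - doubling R (oddValuationPart R v) := by
  induction v using Finsupp.induction_linear with
  | zero => simp only [map_zero, sub_zero]
  | add v w hv hw => simp only [map_add, hv, hw, add_sub_add_comm]
  | single n x =>
    simp only [doubling_single, oddValuationPart_single, odd_padicValNat_two_mul]
    split_ifs <;> simp [doubling_single]

theorem doubling_halving_oddValuationPart (v : ℕ+ →₀ R) :
    doubling R (halving R (oddValuationPart R v)) = oddValuationPart R v := by
  induction v using Finsupp.induction_linear with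
  | zero => simp only [map_zero]
  | add v w hv hw => simp only [map_add, hv, hw]
  | single n x =>
    rw [oddValuationPart_single]
    split_ifs with hn
    · have h2 : 2 ∣ (n : ℕ) := by
        by_contra h
        simp [padicValNat.eq_zero_of_not_dvd h] at hn
      obtain ⟨m, rfl⟩ : 2 ∣ n := PNat.dvd_iff.mpr h2
      rw [← doubling_single, halving_doubling]
    · simp only [map_zero]

theorem ext_oddValuationPart {L L' : Module.End R (ℕ+ →₀ R)}
    (heven : ∀ v, oddValuationPart R v = 0 → L v = L' v)
    (hodd : ∀ v, oddValuationPart R v = v → L v = L' v) : L = L' := by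
  refine LinearMap.ext fun v => ?_
  have h₀ := heven (v - oddValuationPart R v) (by
    rw [map_sub, oddValuationPart_oddValuationPart, sub_self])
  have h₁ := hodd _ (oddValuationPart_oddValuationPart v)
  rw [← sub_add_cancel v (oddValuationPart R v), map_add, map_add, h₀, h₁]

/-- The approximate left inverse of `doubling` for which `1 + modelHalving` is part of an explicit
representation of the modular group. Over `ℤ[h]`, the matrices `S = [[0, -1], [1, 0]]` and
`D = [[1, 1 + h], [h, 1 + h + h ^ 2]]` satisfy `S ^ 2 = -1` and `D * S * D = S + D`. Take
`h = halving ^ 2`, acting on the vectors `v + doubling w` with `v` and `w` supported on the indices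
of even valuation: then `D` becomes `1 + modelHalving`. -/
noncomputable def modelHalving (R : Type*) [CommRing R] : Module.End R (ℕ+ →₀ R) :=
  halving R * (1 + (halving R + halving R ^ 2 + halving R ^ 3) * oddValuationPart R)

/-- The image of `S = [[0, -1], [1, 0]]` in the representation described at `modelHalving`. -/
noncomputable def modelInversion (R : Type*) [CommRing R] : Module.End R (ℕ+ →₀ R) :=
  doubling R * (1 - oddValuationPart R) - halving R * oddValuationPart R

theorem modelInversion_mul_self : modelInversion R * modelInversion R = -1 := by
  refine LinearMap.ext fun v => ?_
  simp only [modelInversion, Module.End.mul_apply, LinearMap.sub_apply, LinearMap.neg_apply,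
    Module.End.one_apply, map_sub, halving_doubling, oddValuationPart_oddValuationPart,
    oddValuationPart_halving, oddValuationPart_doubling, doubling_halving_oddValuationPart]
  abel

theorem modelHalving_relation :
    (1 + modelHalving R) * modelInversion R * (1 + modelHalving R) =
      modelInversion R + (1 + modelHalving R) := by
  refine ext_oddValuationPart (fun v hv => ?_) (fun v hv => ?_)
  · simp only [modelInversion, modelHalving, Module.End.mul_apply, LinearMap.sub_apply,
      LinearMap.add_apply, pow_succ, pow_zero, one_mul, map_add, Module.End.one_apply,
      halving_doubling, oddValuationPart_halving, oddValuationPart_doubling, hv, map_zero,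
      sub_zero, add_zero, sub_self, zero_sub, map_neg]
    abel
  · have hVH : doubling R (halving R v) = v := by rw [← hv, doubling_halving_oddValuationPart]
    have hVH3 : doubling R (halving R (halving R (halving R v))) = halving R (halving R v) := by
      have h := doubling_halving_oddValuationPart (halving R (halving R v))
      simpa only [oddValuationPart_halving, hv, map_sub, map_zero, sub_self, sub_zero] using h
    simp only [modelInversion, modelHalving, Module.End.mul_apply, LinearMap.sub_apply,
      LinearMap.add_apply, pow_succ, pow_zero, one_mul, map_add, Module.End.one_apply,
      oddValuationPart_halving, hv, map_zero,
      sub_zero, add_zero, sub_self, zero_sub, map_neg, hVH, hVH3]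
    abel

theorem modelHalving_mul_doubling_sub_one :
    modelHalving R * doubling R - 1 =
      halving R * ((1 + halving R + halving R ^ 2) * (1 - oddValuationPart R)) := by
  refine LinearMap.ext fun v => ?_
  simp only [modelHalving, Module.End.mul_apply, LinearMap.sub_apply,
    LinearMap.add_apply, pow_succ, pow_zero, one_mul, map_add,
    Module.End.one_apply, map_sub, halving_doubling,
    oddValuationPart_doubling]
  abel

end

variable {R : Type*} [NormedCommRing R] [NormMulClass R]

theorem oddValuationPart_mem_uniformlyBoundedEnd :
    oddValuationPart R ∈ uniformlyBoundedEnd R :=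
  ⟨1, zero_le_one, .of_forall fun c v => by
    rw [one_mul]
    calc weight c (oddValuationPart R v)
        = ∑ i ∈ v.support with Odd (padicValNat 2 (i : ℕ+)), ‖v i‖ * ((i : ℕ) : ℝ) ^ c := by
          refine sum_congr (Finsupp.support_filter _ _) fun i hi => ?_
          rw [oddValuationPart_apply, if_pos (mem_filter.mp hi).2]
      _ ≤ weight c v :=
          sum_le_sum_of_subset_of_nonneg (filter_subset _ _) fun i _ _ => by positivity⟩

theorem isApproxHalving_modelHalving : IsApproxHalving (modelHalving R) := by
  have hH : halving R ∈ uniformlyBoundedEnd R := isContracting_halving.mem_uniformlyBoundedEnd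
  have hP := oddValuationPart_mem_uniformlyBoundedEnd (R := R)
  refine ⟨isContracting_halving.mul ?_, ?_⟩
  · exact add_mem (one_mem _) (mul_mem (add_mem (add_mem hH (pow_mem hH 2)) (pow_mem hH 3)) hP)
  · rw [modelHalving_mul_doubling_sub_one]
    exact isContracting_halving.mul
      (mul_mem (add_mem (add_mem (one_mem _) hH) (pow_mem hH 2)) (sub_mem (one_mem _) hP))

theorem modelInversion_mem_moderateEnd [NormOneClass R] : modelInversion R ∈ moderateEnd R := by
  have hP := uniformlyBoundedEnd_le_moderateEnd (oddValuationPart_mem_uniformlyBoundedEnd (R := R))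
  have hH := uniformlyBoundedEnd_le_moderateEnd
    (isContracting_halving (R := R)).mem_uniformlyBoundedEnd
  exact sub_mem (mul_mem doubling_mem_moderateEnd (sub_mem (one_mem _) hP)) (mul_mem hH hP)

end Model

section Divisors

open Filter Finset

theorem add_one_mul_le_of_dvd {d m k : ℕ} (hd : d ∣ m) (hlt : k * d < m) : (k + 1) * d ≤ m := by
  obtain ⟨q, rfl⟩ := hd
  rw [mul_comm d q] at hlt ⊢
  exact Nat.mul_le_mul_right d (Nat.succ_le_of_lt (lt_of_mul_lt_mul_right hlt d.zero_le))

theorem sum_divisors_sq_le (n : ℕ) :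
    ∑ d ∈ n.divisors, (d : ℝ) ^ 2 ≤ Real.pi ^ 2 / 6 * (n : ℝ) ^ 2 := by
  calc ∑ d ∈ n.divisors, (d : ℝ) ^ 2 = ∑ d ∈ n.divisors, ((n / d : ℕ) : ℝ) ^ 2 :=
        (Nat.sum_div_divisors n fun d => (d : ℝ) ^ 2).symm
    _ = (∑ d ∈ n.divisors, 1 / (d : ℝ) ^ 2) * (n : ℝ) ^ 2 := by
        rw [sum_mul]
        refine sum_congr rfl fun d hd => ?_
        rw [Nat.cast_div_charZero (Nat.dvd_of_mem_divisors hd), div_pow, one_div_mul_eq_div]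
    _ ≤ Real.pi ^ 2 / 6 * (n : ℝ) ^ 2 := by
        gcongr
        exact sum_le_hasSum _ (fun d _ => by positivity) hasSum_zeta_two

theorem sum_sq_le_of_forall_dvd {s : Finset ℕ+} {m : ℕ+} (hs : ∀ d ∈ s, (d : ℕ) ∣ m) :
    ∑ d ∈ s, ((d : ℕ) : ℝ) ^ 2 ≤ Real.pi ^ 2 / 6 * ((m : ℕ) : ℝ) ^ 2 := by
  calc ∑ d ∈ s, ((d : ℕ) : ℝ) ^ 2 = ∑ d ∈ s.image PNat.val, (d : ℝ) ^ 2 :=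
        (sum_image (f := fun d : ℕ => (d : ℝ) ^ 2) PNat.coe_injective.injOn).symm
    _ ≤ ∑ d ∈ (m : ℕ).divisors, (d : ℝ) ^ 2 := by
        refine sum_le_sum_of_subset_of_nonneg ?_ fun d _ _ => by positivity
        exact image_subset_iff.mpr fun d hd => Nat.mem_divisors.mpr ⟨hs d hd, m.ne_zero⟩
    _ ≤ Real.pi ^ 2 / 6 * ((m : ℕ) : ℝ) ^ 2 := sum_divisors_sq_le m

variable {R : Type*} [NormedCommRing R] [NormMulClass R] [NormOneClass R]

theorem weight_sum_single_le {s : Finset ℕ+} {m : ℕ+} {x : ℝ} (hdvd : ∀ d ∈ s, (d : ℕ) ∣ m)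
    (hle : ∀ d ∈ s, ((d : ℕ) : ℝ) ≤ x) (hx : 0 ≤ x) (c : ℕ) :
    weight (c + 2) (∑ d ∈ s, (.single d 1 : ℕ+ →₀ R)) ≤
      x ^ c * (Real.pi ^ 2 / 6 * ((m : ℕ) : ℝ) ^ 2) :=
  calc weight (c + 2) (∑ d ∈ s, (.single d 1 : ℕ+ →₀ R))
      ≤ ∑ d ∈ s, weight (c + 2) (.single d 1 : ℕ+ →₀ R) :=
        le_sum_of_subadditive _ (map_zero _).le (map_add_le_add _) _ _
    _ ≤ ∑ d ∈ s, x ^ c * ((d : ℕ) : ℝ) ^ 2 := sum_le_sum fun d hd => by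
        rw [weight_single, norm_one, one_mul, pow_add]
        gcongr
        exact hle d hd
    _ ≤ x ^ c * (Real.pi ^ 2 / 6 * ((m : ℕ) : ℝ) ^ 2) := by
        rw [← mul_sum]
        gcongr
        exact sum_sq_le_of_forall_dvd hdvd

theorem isContracting_of_apply_single {L : Module.End R (ℕ+ →₀ R)} {s : ℕ+ → Finset ℕ+} {k : ℕ+}
    {r : ℝ} (hL : ∀ n, L (.single n 1) = ∑ d ∈ s n, .single d 1) (hr₀ : 0 ≤ r) (hr₁ : r < 1)
    (hdvd : ∀ n, ∀ d ∈ s n, (d : ℕ) ∣ (k * n : ℕ+))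
    (hle : ∀ n, ∀ d ∈ s n, ((d : ℕ) : ℝ) ≤ r * (n : ℕ)) : IsContracting L := by
  intro ε hε
  have htendsto := (tendsto_pow_atTop_nhds_zero_of_lt_one hr₀ hr₁).mul_const
    (Real.pi ^ 2 / 6 * ((k : ℕ) : ℝ) ^ 2)
  rw [zero_mul] at htendsto
  rw [← map_add_atTop_eq_nat 2, eventually_map]
  filter_upwards [htendsto.eventually_le_const hε] with c hc
  refine weight_map_le fun n => ?_
  rw [hL n]
  calc _ ≤ (r * (n : ℕ)) ^ c * (Real.pi ^ 2 / 6 * (((k * n : ℕ+) : ℕ) : ℝ) ^ 2) :=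
        weight_sum_single_le (hdvd n) (hle n) (by positivity) c
    _ = r ^ c * (Real.pi ^ 2 / 6 * ((k : ℕ) : ℝ) ^ 2) * ((n : ℕ) : ℝ) ^ (c + 2) := by
        push_cast
        ring
    _ ≤ ε * ((n : ℕ) : ℝ) ^ (c + 2) := by gcongr

/-- The divisor matrix, as the endomorphism `e_n ↦ ∑ e_d` over the divisors `d` of `n`. -/
noncomputable def divisorEnd (R : Type*) [CommRing R] : Module.End R (ℕ+ →₀ R) :=
  Finsupp.linearCombination R fun n => ∑ d ∈ Iic n with PNat.val d ∣ n, .single d 1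

section

variable {R : Type*} [CommRing R]

theorem divisorEnd_single (n : ℕ+) :
    divisorEnd R (.single n 1) = ∑ d ∈ Iic n with PNat.val d ∣ n, .single d 1 := by
  rw [divisorEnd, Finsupp.linearCombination_single, one_smul]

theorem divisorEnd_single_apply (i j : ℕ+) :
    divisorEnd R (.single j 1) i = if (i : ℕ) ∣ j then 1 else 0 := by
  rw [divisorEnd_single, Finsupp.finsetSum_apply]
  simp only [Finsupp.single_apply, sum_ite_eq', mem_filter, mem_Iic]
  exact if_congr (and_iff_right_of_imp (Nat.le_of_dvd j.pos)) rfl rfl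

theorem divisorEnd_sub_one_single (n : ℕ+) :
    (divisorEnd R - 1) (.single n 1) = ∑ d ∈ Iio n with PNat.val d ∣ n, .single d 1 := by
  rw [LinearMap.sub_apply, divisorEnd_single, ← Iio_insert, filter_insert, if_pos dvd_rfl,
    sum_insert (by simp), Module.End.one_apply, add_sub_cancel_left]

theorem divisorEnd_sub_one_mul_doubling_sub_one_single (n : ℕ+) :
    ((divisorEnd R - 1) * doubling R - 1) (.single n 1) =
      ∑ d ∈ (Iio (2 * n)).erase n with PNat.val d ∣ (2 * n : ℕ+), .single d 1 := by
  have hn : n ∈ (Iio (2 * n)).filter fun d => PNat.val d ∣ (2 * n : ℕ+) :=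
    mem_filter.mpr ⟨mem_Iio.mpr (lt_mul_of_one_lt_left' n (by decide)), Dvd.intro_left 2 rfl⟩
  rw [LinearMap.sub_apply, Module.End.mul_apply, doubling_single, divisorEnd_sub_one_single,
    filter_erase, ← add_sum_erase _ _ hn, Module.End.one_apply, add_sub_cancel_left]

end

theorem isApproxHalving_divisorEnd_sub_one : IsApproxHalving (divisorEnd R - 1) where
  isContracting := by
    refine isContracting_of_apply_single (k := 1) (r := 1 / 2) divisorEnd_sub_one_single
      (by norm_num) (by norm_num) (fun n d hd => ?_) fun n d hd => ?_
    · rw [one_mul]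
      exact (mem_filter.mp hd).2
    · obtain ⟨hlt, hdvd⟩ := mem_filter.mp hd
      rw [mem_Iio, ← PNat.coe_lt_coe] at hlt
      have hle : 2 * (d : ℕ) ≤ n := add_one_mul_le_of_dvd hdvd (by lia)
      have : 2 * ((d : ℕ) : ℝ) ≤ (n : ℕ) := mod_cast hle
      linarith
  isContracting_mul_doubling_sub_one := by
    refine isContracting_of_apply_single (k := 2) (r := 2 / 3)
      divisorEnd_sub_one_mul_doubling_sub_one_single (by norm_num) (by norm_num)
      (fun n d hd => (mem_filter.mp hd).2) fun n d hd => ?_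
    obtain ⟨hmem, hdvd⟩ := mem_filter.mp hd
    obtain ⟨hne, hlt⟩ := mem_erase.mp hmem
    rw [mem_Iio, ← PNat.coe_lt_coe] at hlt
    rw [← PNat.coe_inj.ne] at hne
    rw [PNat.mul_coe, PNat.val_ofNat] at hdvd hlt
    have hle : 2 * (d : ℕ) ≤ 2 * n := add_one_mul_le_of_dvd hdvd (by lia)
    have hle' : 3 * (d : ℕ) ≤ 2 * n := add_one_mul_le_of_dvd hdvd (by lia)
    have : 3 * ((d : ℕ) : ℝ) ≤ 2 * (n : ℕ) := mod_cast hle'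
    linarith

end Divisors

section Representation

open ModularGroup
open scoped MatrixGroups

theorem exists_moderate_representation (R : Type*) [NormedCommRing R] [NormMulClass R]
    [NormOneClass R] :
    ∃ ρ : SL(2, ℤ) →* (moderateEnd R)ˣ, ((ρ T : moderateEnd R) : Module.End R (ℕ+ →₀ R)) =
      divisorEnd R := by
  have hN : modelHalving R ∈ moderateEnd R := uniformlyBoundedEnd_le_moderateEnd
    isApproxHalving_modelHalving.isContracting.mem_uniformlyBoundedEnd
  let s : moderateEnd R := ⟨modelInversion R, modelInversion_mem_moderateEnd⟩
  let d : moderateEnd R := ⟨1 + modelHalving R, add_mem (one_mem _) hN⟩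
  obtain ⟨ρ, hρ⟩ := exists_monoidHom_SL2_units (s := s) (d := d)
    (Subtype.ext modelInversion_mul_self) (Subtype.ext modelHalving_relation)
  obtain ⟨u, hu⟩ := IsApproxHalving.exists_unit_conj isApproxHalving_modelHalving
    (isApproxHalving_divisorEnd_sub_one (R := R))
  have hconj : SemiconjBy u.1.1 (1 + modelHalving R) (divisorEnd R) := by
    rw [← add_sub_cancel 1 (divisorEnd R)]
    exact (SemiconjBy.one_right u.1.1).add_right hu
  refine ⟨(MulAut.conj u).toMonoidHom.comp ρ, ?_⟩
  calc ((u * ρ T * u⁻¹ : (moderateEnd R)ˣ).1 : Module.End R (ℕ+ →₀ R))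
      = u.1 * (1 + modelHalving R) * (u⁻¹).1 := by
        rw [Units.val_mul, Units.val_mul, hρ]
        rfl
    _ = divisorEnd R * ↑(u.1 * (u⁻¹).1) := by
        rw [hconj.eq, mul_assoc]
        rfl
    _ = divisorEnd R := by rw [Units.mul_inv, OneMemClass.coe_one, mul_one]

theorem exists_entry_bound_of_mem_moderateEnd {L : Module.End ℤ (ℕ+ →₀ ℤ)}
    (hL : L ∈ moderateEnd ℤ) : ∃ C c : ℝ, 0 < C ∧ 0 < c ∧
      (∀ i j : ℕ+, C * ((j : ℕ) : ℝ) ^ c < (i : ℕ) → L (.single j 1) i = 0) ∧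
      ∀ i j : ℕ+, ‖L (.single j 1) i‖ ≤ C * ((j : ℕ) : ℝ) ^ c := by
  obtain ⟨c, K, hK, hbound⟩ := hL 1
  have hentry (i j : ℕ+) : ‖L (.single j 1) i‖ * (i : ℕ) ≤
      (K + 1) * ((j : ℕ) : ℝ) ^ ((c + 1 : ℕ) : ℝ) :=
    calc ‖L (.single j 1) i‖ * (i : ℕ) ≤ weight 1 (L (.single j 1)) := by
          simpa only [pow_one] using norm_apply_mul_pow_le_weight 1 (L (.single j 1)) i
      _ ≤ K * ((j : ℕ) : ℝ) ^ c := by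
          simpa only [weight_single, norm_one, one_mul] using hbound (.single j 1)
      _ ≤ (K + 1) * ((j : ℕ) : ℝ) ^ ((c + 1 : ℕ) : ℝ) := by
          rw [Real.rpow_natCast]
          gcongr
          · linarith
          · exact_mod_cast j.pos
          · exact c.le_succ
  refine ⟨K + 1, (c + 1 : ℕ), by positivity, by positivity, fun i j hij => ?_, fun i j => ?_⟩
  · by_contra hne
    have hone : 1 ≤ ‖L (.single j 1) i‖ := by
      rw [Int.norm_eq_abs]
      exact_mod_cast Int.one_le_abs hne
    exact (hij.trans_le (le_mul_of_one_le_left (Nat.cast_nonneg _) hone)).not_ge (hentry i j)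
  · exact (le_mul_of_one_le_right (norm_nonneg _) (mod_cast i.pos)).trans (hentry i j)

end Representation

section BaseChange

open scoped TensorProduct

/-- Extension of scalars of matrices along `R → A`, on endomorphisms of free modules. -/
noncomputable def finsuppBaseChange (R A ι : Type*) [CommRing R] [CommRing A] [Algebra R A]
    [DecidableEq ι] : Module.End R (ι →₀ R) →+* Module.End A (ι →₀ A) :=
  ((TensorProduct.finsuppScalarRight R A A ι).conjAlgEquiv R).toAlgHom.comp
    (Module.End.baseChangeHom R A (ι →₀ R)) |>.toRingHom

theorem finsuppBaseChange_single_apply {R A ι : Type*} [CommRing R] [CommRing A] [Algebra R A]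
    [DecidableEq ι] (L : Module.End R (ι →₀ R)) (i j : ι) :
    finsuppBaseChange R A ι L (.single j 1) i = algebraMap R A (L (.single j 1) i) := by
  calc finsuppBaseChange R A ι L (.single j 1) i
      = TensorProduct.finsuppScalarRight R A A ι (1 ⊗ₜ[R] L (.single j 1)) i := by
        rw [← LinearMap.baseChange_tmul,
          ← TensorProduct.finsuppScalarRight_symm_apply_single (S := A)]
        rfl
    _ = algebraMap R A (L (.single j 1) i) := by
        rw [TensorProduct.finsuppScalarRight_apply_tmul_apply, Algebra.algebraMap_eq_smul_one]

end BaseChange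

theorem stmt1 :
    ∃ ρ : Matrix.SpecialLinearGroup (Fin 2) ℤ →* ((ℕ+ →₀ ℂ) ≃ₗ[ℂ] (ℕ+ →₀ ℂ)),
      -- (a) `ρ(T)` is the divisor matrix
      (∀ i j : ℕ+, entry (ρ Tgen) i j = if (i : ℕ) ∣ (j : ℕ) then 1 else 0) ∧
      -- (b) all entries of every `ρ(Y)` are integers
      (∀ Y : Matrix.SpecialLinearGroup (Fin 2) ℤ, ∀ i j : ℕ+,
        ∃ z : ℤ, entry (ρ Y) i j = (z : ℂ)) ∧
      -- (c) each `ρ(Y)` satisfies the growth/vanishing conditions of `DR₀`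
      (∀ Y : Matrix.SpecialLinearGroup (Fin 2) ℤ, ∃ C c : ℝ, 0 < C ∧ 0 < c ∧
        (∀ i j : ℕ+, C * ((j : ℕ) : ℝ) ^ c < ((i : ℕ) : ℝ) → entry (ρ Y) i j = 0) ∧
        (∀ i j : ℕ+, ‖entry (ρ Y) i j‖ ≤ C * ((j : ℕ) : ℝ) ^ c)) := by
  obtain ⟨ρ, hρ⟩ := exists_moderate_representation ℤ
  let ψ := (LinearMap.GeneralLinearGroup.generalLinearEquiv ℂ (ℕ+ →₀ ℂ)).toMonoidHom.comp
    (Units.map ((finsuppBaseChange ℤ ℂ ℕ+).comp (moderateEnd ℤ).subtype).toMonoidHom)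
  have hentry Y i j : entry (ψ (ρ Y)) i j = ((ρ Y).1.1 (.single j 1) i : ℤ) :=
    finsuppBaseChange_single_apply (ρ Y).1.1 i j
  refine ⟨ψ.comp ρ, fun i j => ?_, fun Y i j => ⟨_, hentry Y i j⟩, fun Y => ?_⟩
  · calc entry (ψ (ρ ModularGroup.T)) i j = (divisorEnd ℤ (.single j 1) i : ℤ) := by
          rw [hentry, hρ]
      _ = if (i : ℕ) ∣ j then 1 else 0 := by
          rw [divisorEnd_single_apply]
          push_cast
          rfl
  · obtain ⟨C, c, hC, hc, hvanish, hbound⟩ := exists_entry_bound_of_mem_moderateEnd (ρ Y).1.2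
    refine ⟨C, c, hC, hc, fun i j hij => ?_, fun i j => ?_⟩
    · exact (hentry Y i j).trans (by rw [hvanish i j hij, Int.cast_zero])
    · rw [MonoidHom.comp_apply, hentry, Complex.norm_intCast, ← Int.norm_eq_abs]
      exact hbound i j
end

section
/- Let G = SL(2,ℤ) and let V be the standard 2-dimensional module over the group algebra ℂG, i.e. V = ℂ² with G acting by matrix multiplication. Then Ext¹_{ℂG}(V, V) is a 1-dimensional complex vector space: Ext¹_{ℂG}(V, V) ≅ ℂ. -/
open CategoryTheory

/-- The standard 2-dimensional representation of `SL(2,ℤ)` on `ℂ²`,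
given by matrix multiplication (via the inclusion `SL(2,ℤ) ⊂ GL(2,ℂ)`). -/
noncomputable def stdRep :
    Representation ℂ (Matrix.SpecialLinearGroup (Fin 2) ℤ) (Fin 2 → ℂ) :=
  (LinearEquiv.automorphismGroup.toLinearMapMonoidHom).comp
    ((Matrix.SpecialLinearGroup.toLin').comp
      (Matrix.SpecialLinearGroup.map (Int.castRingHom ℂ)))

/-- The standard module `V = ℂ²` as an object of the category of
`ℂ[SL(2,ℤ)]`-modules (equivalently, representations of `SL(2,ℤ)` over `ℂ`). -/
noncomputable def Vstd : Rep ℂ (Matrix.SpecialLinearGroup (Fin 2) ℤ) :=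
  Rep.of stdRep

/-!
The adjunction `V ⊗ - ⊣ Hom(V, -)` identifies `Ext¹(V, V)` with `H¹(G, End V)`, where
`End V` is the space of `2 × 2` matrices under conjugation. The entry `D(T)₁₀` of a cocycle `D`
depends only on its cohomology class, since `T` is upper unitriangular.

If `D(T)₁₀ = 0`, then `D` is a coboundary: `S` and `ST` have finite orders `4` and `6`, so the
traces of `D(S)`, `D(S) S`, `D(ST)` and `D(ST) ST` vanish, and these relations let one solve for a
matrix `X` with `D(g) = g X g⁻¹ - X` at the generators `g = S, T`.

To find a cocycle with `D(T)₁₀ ≠ 0`, let `f` be the indicator function of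
`{h | Re (h⁻¹ • i) < 0}`. Every left translate of `f` differs from `f` at finitely many elements
only (it suffices to check `S`, which fixes `i`, and `T`), so `D(g) = ∑ₕ (f(g⁻¹h) - f(h)) h m h⁻¹`
is a cocycle for every matrix `m`; for `m = E₀₁` it has `D(T)₁₀ = -2`.
-/

section Adjunction

universe v u₁ u₂

variable {R : Type*} [Ring R] {C : Type u₁} {D : Type u₂} [Category.{v} C] [Category.{v} D]

section Linear

variable [Preadditive C] [Preadditive D] [Linear R C] [Linear R D]

/-- The hom-set bijection of an adjunction with linear left adjoint, as a linear equivalence. -/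
noncomputable def homLinearEquivOfAdjunction {F : C ⥤ D} {U : D ⥤ C} (adj : F ⊣ U) [F.Additive]
    [F.Linear R] (X : C) (Y : D) : (F.obj X ⟶ Y) ≃ₗ[R] (X ⟶ U.obj Y) :=
  LinearEquiv.symm
    { (adj.homAddEquiv X Y).symm with
      map_smul' r f := by simp [Adjunction.homEquiv_counit, Functor.map_smul] }

end Linear

variable [Abelian C] [Abelian D] [Linear R C] [Linear R D]
  [EnoughProjectives C] [EnoughProjectives D]

/-- `Extⁿ(F X, Y) ≅ Extⁿ(X, U Y)` for an adjunction `F ⊣ U` in which `F` is exact and preserves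
projective objects. -/
noncomputable def extIsoOfAdjunction {F : C ⥤ D} {U : D ⥤ C} (adj : F ⊣ U) [F.Additive]
    [F.Linear R] [F.PreservesHomology] [F.PreservesProjectiveObjects] (X : C) (Y : D) (n : ℕ) :
    ((Ext R D n).obj (Opposite.op (F.obj X))).obj Y ≅
      ((Ext R C n).obj (Opposite.op X)).obj (U.obj Y) :=
  (F.mapProjectiveResolution (projectiveResolution X)).isoExt n Y ≪≫
    (HomologicalComplex.homologyFunctor _ _ n).mapIso
      (HomologicalComplex.Hom.isoOfComponents
        (fun i ↦ (homLinearEquivOfAdjunction adj _ Y).toModuleIso)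
        (fun i j _ ↦ by
          ext f
          exact (adj.homEquiv_naturality_left _ _).symm)) ≪≫
    ((projectiveResolution X).isoExt n (U.obj Y)).symm

end Adjunction

section ExtOfRep

open MonoidalCategory Limits

universe u

variable {k G : Type u} [CommRing k] [Group G]

instance preservesMonomorphisms_tensorLeft_of_flat (V : Rep.{u} k G) [Module.Flat k V] :
    (tensorLeft V).PreservesMonomorphisms where
  preserves f hf := by
    rw [Rep.mono_iff_injective] at hf ⊢
    exact Module.Flat.lTensor_preserves_injective_linearMap (M := V) f.hom.toLinearMap hf

instance preservesHomology_tensorLeft_of_flat (V : Rep.{u} k G) [Module.Flat k V] :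
    (tensorLeft V).PreservesHomology :=
  have : PreservesColimits (tensorLeft V) := (ihom.adjunction V).leftAdjoint_preservesColimits
  Functor.preservesHomology_of_preservesMonos_and_cokernels _

instance preservesEpimorphisms_ihom_of_projective (V : Rep.{u} k G) [Module.Projective k V] :
    (ihom V).PreservesEpimorphisms where
  preserves f hf := by
    rw [Rep.epi_iff_surjective] at hf ⊢
    exact fun y ↦ Module.projective_lifting_property f.hom.toLinearMap y hf

instance preservesProjectiveObjects_tensorLeft_of_projective (V : Rep.{u} k G)
    [Module.Projective k V] : (tensorLeft V).PreservesProjectiveObjects :=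
  Functor.preservesProjectiveObjects_of_adjunction_of_preservesEpimorphisms (ihom.adjunction V)

instance linear_tensorLeft (V : Rep.{u} k G) : (tensorLeft V).Linear k where

/-- `Extⁿ(V, W) ≅ Hⁿ(G, Hom(V, W))` when `V` is projective over the base ring. -/
noncomputable def extIsoGroupCohomologyIhom (V W : Rep.{u} k G) [Module.Projective k V] (n : ℕ) :
    ((Ext k (Rep k G) n).obj (Opposite.op V)).obj W ≅ groupCohomology ((ihom V).obj W) n :=
  ((Ext k (Rep k G) n).mapIso (ρ_ V).op).app W ≪≫
    extIsoOfAdjunction (ihom.adjunction V) (Rep.trivial k G k) W n ≪≫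
    (groupCohomologyIsoExt _ n).symm

end ExtOfRep

open groupCohomology

section Cocycles

universe u

variable {k G : Type u} [CommRing k] [Group G] {A : Rep.{u} k G}

theorem cocycles₁_map_mul (D : cocycles₁ A) (g h : G) : D (g * h) = A.ρ g (D h) + D g :=
  (mem_cocycles₁_iff D).1 D.2 g h

theorem cocycles₁_ext_of_closure_eq_top {s : Set G} (hs : Subgroup.closure s = ⊤)
    {D E : cocycles₁ A} (h : ∀ g ∈ s, D g = E g) : D = E := by
  ext g
  induction hs ▸ Subgroup.mem_top g using Subgroup.closure_induction with
  | mem g hg => exact h g hg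
  | one => rw [cocycles₁_map_one, cocycles₁_map_one]
  | mul g₁ g₂ _ _ h₁ h₂ => rw [cocycles₁_map_mul, cocycles₁_map_mul, h₁, h₂]
  | inv g _ hg =>
    apply (A.ρ.apply_bijective g).injective
    rw [cocycles₁_map_inv, cocycles₁_map_inv, hg]

/-- A surjective linear map from the cocycles whose kernel consists of the coboundaries computes
the first cohomology. -/
noncomputable def H1IsoOfSurjective {M : Type u} [AddCommGroup M] [Module k M]
    (f : cocycles₁ A →ₗ[k] M) (hf : Function.Surjective f)
    (hker : ∀ D, f D = 0 ↔ ⇑D ∈ coboundaries₁ A) : H1 A ≅ ModuleCat.of k M :=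
  LinearEquiv.toModuleIso <|
    ((H1π A).hom.quotKerEquivOfSurjective
      ((ModuleCat.epi_iff_surjective _).1 inferInstance)).symm ≪≫ₗ
    Submodule.quotEquivOfEq _ _ (by ext D; exact (H1π_eq_zero_iff D).trans (hker D).symm) ≪≫ₗ
    f.quotKerEquivOfSurjective hf

end Cocycles

section AlmostInvariant

/-- A function on a group is almost invariant if each of its left translates agrees with it outside
a finite set. -/
def IsAlmostInvariant {G α : Type*} [Group G] (f : G → α) : Prop :=
  ∀ g, {h | f (g⁻¹ * h) ≠ f h}.Finite

theorem isAlmostInvariant_of_closure_eq_top {G α : Type*} [Group G] {f : G → α} {s : Set G}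
    (hs : Subgroup.closure s = ⊤) (hf : ∀ g ∈ s, {h | f (g⁻¹ * h) ≠ f h}.Finite) :
    IsAlmostInvariant f := by
  intro g
  induction hs ▸ Subgroup.mem_top g using Subgroup.closure_induction with
  | mem g hg => exact hf g hg
  | one => simp
  | mul g₁ g₂ _ _ h₁ h₂ =>
    refine (h₁.union (h₂.preimage (mul_right_injective g₁⁻¹).injOn)).subset fun h ne ↦ ?_
    by_contra notMem
    simp only [Set.mem_union, Set.mem_preimage, Set.mem_ofPred_eq, not_or, not_not] at notMem
    apply ne
    rw [mul_inv_rev, mul_assoc, notMem.2, notMem.1]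
  | inv g _ hg =>
    exact (hg.preimage (mul_right_injective g).injOn).subset fun h ne ↦ by simpa using ne.symm

namespace IsAlmostInvariant

universe u

variable {k G : Type u} [CommRing k] [Group G] {A : Rep.{u} k G} {f : G → k}
  (hf : IsAlmostInvariant f) (m : A)
include hf

theorem finite_support_sub_smul (g : G) :
    (Function.support fun h ↦ (f (g⁻¹ * h) - f h) • A.ρ h m).Finite :=
  (hf g).subset fun h hh hc ↦ hh (by simp [hc])

theorem finsum_sub_smul_mem_cocycles₁ :
    (fun g ↦ ∑ᶠ h, (f (g⁻¹ * h) - f h) • A.ρ h m) ∈ cocycles₁ A := by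
  rw [mem_cocycles₁_iff]
  intro g₁ g₂
  let translate (h : G) : A := (f (g₂⁻¹ * (g₁⁻¹ * h)) - f (g₁⁻¹ * h)) • A.ρ h m
  have ρ_finsum : A.ρ g₁ (∑ᶠ h, (f (g₂⁻¹ * h) - f h) • A.ρ h m) = ∑ᶠ h, translate h := by
    rw [map_finsum _ (hf.finite_support_sub_smul m g₂),
      ← finsum_comp_equiv (f := translate) (Equiv.mulLeft g₁)]
    simp [translate]
  have finite_support_translate : (Function.support translate).Finite :=
    ((hf g₂).preimage (mul_right_injective g₁⁻¹).injOn).subset fun h hh hc ↦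
      hh (by simp [translate, hc])
  rw [ρ_finsum,
    ← finsum_add_distrib finite_support_translate (hf.finite_support_sub_smul m g₁)]
  exact finsum_congr fun h ↦ by rw [← add_smul, sub_add_sub_cancel, mul_inv_rev, mul_assoc]

/-- The cocycle attached to an almost invariant function `f` and a vector `m`: formally, the
coboundary of the possibly infinite sum of the `f h • A.ρ h m`. -/
noncomputable def cocycle : cocycles₁ A :=
  ⟨_, hf.finsum_sub_smul_mem_cocycles₁ m⟩

theorem cocycle_apply (g : G) : hf.cocycle m g = ∑ᶠ h, (f (g⁻¹ * h) - f h) • A.ρ h m := rfl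

end IsAlmostInvariant

end AlmostInvariant

open Matrix

section MatrixRep

universe u

variable {k G : Type u} [CommRing k] [Group G] {n : Type u} [Fintype n] [DecidableEq n]

/-- The representation on column vectors defined by a homomorphism to matrices. -/
def matrixRep (φ : G →* Matrix n n k) : Representation k G (n → k) :=
  (toLinAlgEquiv' : Matrix n n k ≃ₐ[k] _).toMonoidHom.comp φ

theorem toMatrix'_matrixRep (φ : G →* Matrix n n k) (g : G) :
    LinearMap.toMatrix' (matrixRep φ g) = φ g :=
  LinearMap.toMatrix'_toLin' (φ g)

/-- The representation on square matrices by conjugation. The group being arbitrary, `φ g⁻¹` takes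
the place of the matrix inverse. -/
def matrixConjRep (φ : G →* Matrix n n k) : Representation k G (Matrix n n k) where
  toFun g := LinearMap.mulLeftRight k (φ g, φ g⁻¹)
  map_one' := by ext1 X; simp
  map_mul' g h := by ext1 X; simp [mul_assoc]

theorem matrixConjRep_apply_apply (φ : G →* Matrix n n k) (g : G) (X : Matrix n n k) :
    matrixConjRep φ g X = φ g * X * φ g⁻¹ := rfl

/-- Taking matrices of endomorphisms is equivariant for conjugation. -/
def linHomEquivMatrixConjRep (φ : G →* Matrix n n k) :
    ((matrixRep φ).linHom (matrixRep φ)).Equiv (matrixConjRep φ) :=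
  Representation.Equiv.mk LinearMap.toMatrix' fun g ↦ by
    ext1 f
    simp [matrixConjRep_apply_apply, toMatrix'_matrixRep, LinearMap.toMatrix'_comp, mul_assoc]

/-- The column vectors as an object of `Rep k G`. -/
noncomputable abbrev matrixModule (φ : G →* Matrix n n k) : Rep.{u} k G :=
  Rep.of (matrixRep φ)

/-- The square matrices under conjugation as an object of `Rep k G`. -/
noncomputable abbrev matrixConj (φ : G →* Matrix n n k) : Rep.{u} k G :=
  Rep.of (X := Matrix n n k) (matrixConjRep φ)

/-- `Extⁱ(V, V) ≅ Hⁱ(G, Mₙ(k))` for the module `V` of column vectors. -/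
noncomputable def extIsoGroupCohomologyMatrixConj (φ : G →* Matrix n n k) (i : ℕ) :
    ((Ext k (Rep k G) i).obj (Opposite.op (matrixModule φ))).obj (matrixModule φ) ≅
      groupCohomology (matrixConj φ) i :=
  extIsoGroupCohomologyIhom _ _ i ≪≫
    (groupCohomology.functor k G i).mapIso (Rep.mkIso (linHomEquivMatrixConjRep φ))

variable {φ : G →* Matrix n n k} {g : G} {M : Matrix n n k}

theorem trace_matrixConjRep_mul (X : Matrix n n k) (hM : Commute (φ g) M) :
    trace (matrixConjRep φ g X * M) = trace (X * M) := by
  calc trace (φ g * X * φ g⁻¹ * M) = trace (X * (φ g⁻¹ * (M * φ g))) := by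
        rw [mul_assoc, mul_assoc, trace_mul_comm]
        simp only [mul_assoc]
    _ = trace (X * M) := by
        rw [← hM.eq, ← mul_assoc (φ g⁻¹), ← map_mul, inv_mul_cancel, map_one, one_mul]

variable (D : cocycles₁ (matrixConj φ))

theorem matrixConj_cocycles₁_map_mul (g h : G) : D (g * h) = matrixConjRep φ g (D h) + D g :=
  cocycles₁_map_mul D g h

theorem trace_cocycles₁_pow_mul (hM : Commute (φ g) M) (m : ℕ) :
    trace (D (g ^ m) * M) = m * trace (D g * M) := by
  induction m with
  | zero => simp
  | succ m ih =>
    rw [pow_succ', matrixConj_cocycles₁_map_mul, add_mul, trace_add,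
      trace_matrixConjRep_mul _ hM, ih]
    push_cast
    ring

theorem trace_cocycles₁_mul_eq_zero (hM : Commute (φ g) M) {m : ℕ} (hg : g ^ m = 1)
    (hm : IsUnit (m : k)) : trace (D g * M) = 0 := by
  rw [← hm.mul_right_eq_zero, ← trace_cocycles₁_pow_mul D hM, hg, cocycles₁_map_one, zero_mul,
    trace_zero]

end MatrixRep

section SL2Z

open MatrixGroups ModularGroup

section MatrixFormulas

variable {k : Type*} [CommRing k]

/-- The matrix over `k` of an element of `SL(2, ℤ)`, by mapping its entries to `k`. -/
def slToMatrix (k : Type*) [CommRing k] : SL(2, ℤ) →* Matrix (Fin 2) (Fin 2) k :=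
  Matrix.SpecialLinearGroup.coeMonoidHom.comp (Matrix.SpecialLinearGroup.map (Int.castRingHom k))

theorem slToMatrix_apply (g : SL(2, ℤ)) :
    slToMatrix k g = !![(g 0 0 : k), (g 0 1 : k); (g 1 0 : k), (g 1 1 : k)] :=
  eta_fin_two _

theorem slToMatrix_S : slToMatrix k S = !![0, -1; 1, 0] := by
  simp [slToMatrix_apply, coe_S]

theorem slToMatrix_T : slToMatrix k T = !![1, 1; 0, 1] := by
  simp [slToMatrix_apply, coe_T]

theorem slToMatrix_neg (g : SL(2, ℤ)) : slToMatrix k (-g) = -slToMatrix k g := by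
  ext i j
  simp [slToMatrix]

theorem slToMatrix_inv_S : slToMatrix k S⁻¹ = !![0, 1; -1, 0] := by
  simp [S_inv, slToMatrix_neg, slToMatrix_S]

theorem slToMatrix_inv_T : slToMatrix k T⁻¹ = !![1, -1; 0, 1] := by
  simp [slToMatrix_apply, coe_T_inv, -Matrix.SpecialLinearGroup.coe_inv]

end MatrixFormulas

variable {k : Type} [CommRing k]

theorem matrixConjRep_S (X : Matrix (Fin 2) (Fin 2) k) :
    matrixConjRep (slToMatrix k) S X = !![X 1 1, -X 1 0; -X 0 1, X 0 0] := by
  rw [matrixConjRep_apply_apply, slToMatrix_S, slToMatrix_inv_S, X.eta_fin_two]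
  simp

theorem matrixConjRep_T (X : Matrix (Fin 2) (Fin 2) k) :
    matrixConjRep (slToMatrix k) T X =
      !![X 0 0 + X 1 0, X 0 1 + X 1 1 - (X 0 0 + X 1 0); X 1 0, X 1 1 - X 1 0] := by
  rw [matrixConjRep_apply_apply, slToMatrix_T, slToMatrix_inv_T, X.eta_fin_two]
  simp [sub_eq_add_neg, add_comm]

theorem matrixConjRep_neg (g : SL(2, ℤ)) :
    matrixConjRep (slToMatrix k) (-g) = matrixConjRep (slToMatrix k) g := by
  ext1 X
  simp only [matrixConjRep_apply_apply, inv_neg, slToMatrix_neg, neg_mul, mul_neg, neg_neg]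

section Relations

variable (D : cocycles₁ (matrixConj (slToMatrix k)))

theorem S_pow_four : (S : SL(2, ℤ)) ^ 4 = 1 := by decide

theorem S_mul_T_pow_six : (S * T : SL(2, ℤ)) ^ 6 = 1 := by decide

theorem cocycles₁_relations_of_S_pow_four (h : IsUnit (2 : k)) :
    D S 1 1 = -D S 0 0 ∧ D S 1 0 = D S 0 1 := by
  have unit_four : IsUnit ((4 : ℕ) : k) := by
    simpa only [show ((4 : ℕ) : k) = 2 * 2 by norm_num] using h.mul h
  have trace_one : D S 0 0 + D S 1 1 = 0 := by
    simpa [trace_fin_two] using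
      trace_cocycles₁_mul_eq_zero D (M := 1) (Commute.one_right _) S_pow_four unit_four
  have trace_S : D S 0 1 + -D S 1 0 = 0 := by
    simpa [trace_fin_two, mul_apply, slToMatrix_S] using
      trace_cocycles₁_mul_eq_zero D (Commute.refl _) S_pow_four unit_four
  exact ⟨by linear_combination trace_one, by linear_combination -trace_S⟩

theorem cocycles₁_relations_of_S_mul_T_pow_six (h : IsUnit (6 : k)) :
    D T 1 1 = -D T 0 0 ∧ D S 0 0 = D T 0 0 + D T 0 1 - D T 1 0 := by
  obtain ⟨hS, hS'⟩ :=
    cocycles₁_relations_of_S_pow_four D (isUnit_of_dvd_unit ⟨3, by norm_num⟩ h)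
  have unit_six : IsUnit ((6 : ℕ) : k) := by exact_mod_cast h
  have D_ST : D (S * T) =
      !![D T 1 1 + D S 0 0, -D T 1 0 + D S 0 1; -D T 0 1 + D S 1 0, D T 0 0 + D S 1 1] := by
    rw [matrixConj_cocycles₁_map_mul, matrixConjRep_S, (D S).eta_fin_two]
    simp
  have trace_one : D T 1 1 + D S 0 0 + (D T 0 0 + D S 1 1) = 0 := by
    simpa [trace_fin_two, D_ST] using
      trace_cocycles₁_mul_eq_zero D (M := 1) (Commute.one_right _) S_mul_T_pow_six unit_six
  have trace_ST :
      -D T 1 0 + D S 0 1 + (-(-D T 0 1 + D S 1 0) + (D T 0 0 + D S 1 1)) = 0 := by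
    simpa [trace_fin_two, mul_apply, slToMatrix_S, slToMatrix_T, D_ST] using
      trace_cocycles₁_mul_eq_zero D (Commute.refl _) S_mul_T_pow_six unit_six
  exact ⟨by linear_combination trace_one - hS, by linear_combination hS - hS' - trace_ST⟩

/-- The linear form `D ↦ D(T)₁₀` on cocycles. -/
noncomputable def lowerLeftAtT (k : Type) [CommRing k] :
    cocycles₁ (matrixConj (slToMatrix k)) →ₗ[k] k where
  toFun D := D T 1 0
  map_add' _ _ := rfl
  map_smul' _ _ := rfl

theorem lowerLeftAtT_apply : lowerLeftAtT k D = D T 1 0 := rfl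

theorem lowerLeftAtT_eq_zero_of_mem_coboundaries₁
    (hD : ⇑D ∈ coboundaries₁ (matrixConj (slToMatrix k))) : lowerLeftAtT k D = 0 := by
  obtain ⟨X : Matrix (Fin 2) (Fin 2) k, hX⟩ := hD
  have D_T : D T = matrixConjRep (slToMatrix k) T X - X := (congrFun hX T).symm
  rw [lowerLeftAtT_apply, D_T, matrixConjRep_T]
  exact sub_self _

theorem mem_coboundaries₁_of_lowerLeftAtT_eq_zero (h : IsUnit (6 : k))
    (hD : lowerLeftAtT k D = 0) : ⇑D ∈ coboundaries₁ (matrixConj (slToMatrix k)) := by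
  obtain ⟨hS, hS'⟩ :=
    cocycles₁_relations_of_S_pow_four D (isUnit_of_dvd_unit ⟨3, by norm_num⟩ h)
  obtain ⟨hT, hST⟩ := cocycles₁_relations_of_S_mul_T_pow_six D h
  rw [lowerLeftAtT_apply] at hD
  let X : Matrix (Fin 2) (Fin 2) k := !![0, -(D T 0 0 + D S 0 1); D T 0 0, D S 0 0]
  have D_S : D S = matrixConjRep (slToMatrix k) S X - X := by
    rw [matrixConjRep_S, (D S).eta_fin_two, hS, hS']
    ext i j
    fin_cases i <;> fin_cases j <;> simp [X]
  have D_T : D T = matrixConjRep (slToMatrix k) T X - X := by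
    rw [matrixConjRep_T, (D T).eta_fin_two, hT, hD]
    ext i j
    fin_cases i <;> fin_cases j <;> simp [X, hST, hD]
    ring
  let E : cocycles₁ (matrixConj (slToMatrix k)) :=
    ⟨d₀₁ (matrixConj (slToMatrix k)) X, d₀₁_apply_mem_cocycles₁ _⟩
  have D_eq : D = E := cocycles₁_ext_of_closure_eq_top SpecialLinearGroup.SL2Z_generators <| by
    rintro g (rfl | rfl)
    exacts [D_S, D_T]
  exact ⟨X, congrArg Subtype.val D_eq.symm⟩

end Relations

section LeftHalf

theorem SL2Z_det (h : SL(2, ℤ)) : h 0 0 * h 1 1 - h 0 1 * h 1 0 = 1 := by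
  rw [← det_fin_two, h.det_coe]

theorem SL2Z_ext_iff {g h : SL(2, ℤ)} :
    g = h ↔ g 0 0 = h 0 0 ∧ g 0 1 = h 0 1 ∧ g 1 0 = h 1 0 ∧ g 1 1 = h 1 1 := by
  refine (Matrix.SpecialLinearGroup.ext_iff g h).trans ?_
  simp only [Fin.forall_fin_two, and_assoc]

/-- The set of `h` for which `h⁻¹ • i = (-(ab + cd) + i) / (a² + c²)` lies to the left of the
imaginary axis, where `a, b, c, d` are the entries of `h`. -/
def leftHalf : Set SL(2, ℤ) := {h | 0 < h 0 0 * h 0 1 + h 1 0 * h 1 1}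

theorem mem_leftHalf {h : SL(2, ℤ)} : h ∈ leftHalf ↔ 0 < h 0 0 * h 0 1 + h 1 0 * h 1 1 := Iff.rfl

theorem S_inv_mul_mem_leftHalf (h : SL(2, ℤ)) : S⁻¹ * h ∈ leftHalf ↔ h ∈ leftHalf := by
  simp [mem_leftHalf, S_inv, coe_S, vecMul, dotProduct, add_comm]

theorem T_inv_mul_mem_leftHalf_iff (h : SL(2, ℤ)) :
    T⁻¹ * h ∈ leftHalf ↔ 0 < (h 0 0 - h 1 0) * (h 0 1 - h 1 1) + h 1 0 * h 1 1 := by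
  simp [mem_leftHalf, coe_T_inv, -Matrix.SpecialLinearGroup.coe_inv, vecMul, dotProduct,
    sub_eq_add_neg]

theorem row_products_mul_nonneg (h : SL(2, ℤ)) : 0 ≤ (h 0 0 * h 0 1) * (h 1 0 * h 1 1) := by
  have factor : (h 0 0 * h 0 1) * (h 1 0 * h 1 1) =
      (h 0 1 * h 1 0) * (h 0 1 * h 1 0 + 1) := by
    linear_combination h 0 1 * h 1 0 * SL2Z_det h
  rw [factor]
  obtain hbc | hbc := le_or_gt 0 (h 0 1 * h 1 0)
  · positivity
  · exact mul_nonneg_of_nonpos_of_nonpos hbc.le hbc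

theorem mem_leftHalf_iff_of_bottom_row_ne_zero {h : SL(2, ℤ)} (hh : h 1 0 * h 1 1 ≠ 0) :
    h ∈ leftHalf ↔ 0 < h 1 0 * h 1 1 := by
  have same_sign := row_products_mul_nonneg h
  rw [mem_leftHalf]
  obtain hneg | hpos := hh.lt_or_gt <;> constructor <;> intro <;> nlinarith

theorem T_inv_mul_mem_leftHalf_of_lower_left_eq_zero {h : SL(2, ℤ)} (hc : h 1 0 = 0)
    (hT : h ≠ T) (hT' : h ≠ -T) : T⁻¹ * h ∈ leftHalf ↔ h ∈ leftHalf := by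
  have diag : h 0 0 * h 1 1 = 1 := by simpa [hc] using SL2Z_det h
  rw [T_inv_mul_mem_leftHalf_iff, mem_leftHalf]
  simp only [ne_eq, SL2Z_ext_iff, SpecialLinearGroup.coe_neg, neg_apply, coe_T, of_apply,
    cons_val] at hT hT'
  obtain ⟨ha, hd⟩ | ⟨ha, hd⟩ := Int.mul_eq_one_iff_eq_one_or_neg_one.1 diag <;>
  · simp only [ha, hc, hd] at hT hT' ⊢
    lia

theorem T_inv_mul_mem_leftHalf_of_lower_right_eq_zero {h : SL(2, ℤ)} (hd : h 1 1 = 0)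
    (hS : h ≠ S) (hS' : h ≠ -S) : T⁻¹ * h ∈ leftHalf ↔ h ∈ leftHalf := by
  have antidiag : h 0 1 * h 1 0 = -1 := by
    have det_eq := SL2Z_det h
    rw [hd] at det_eq
    lia
  rw [T_inv_mul_mem_leftHalf_iff, mem_leftHalf]
  simp only [ne_eq, SL2Z_ext_iff, SpecialLinearGroup.coe_neg, neg_apply, coe_S, of_apply,
    cons_val] at hS hS'
  obtain ⟨hb, hc⟩ | ⟨hb, hc⟩ := Int.mul_eq_neg_one_iff_eq_one_or_neg_one.1 antidiag <;>
  · simp only [hb, hc, hd] at hS hS' ⊢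
    lia

theorem T_inv_mul_mem_leftHalf {h : SL(2, ℤ)}
    (hh : h ∉ ({S, -S, T, -T} : Finset SL(2, ℤ))) : T⁻¹ * h ∈ leftHalf ↔ h ∈ leftHalf := by
  simp only [Finset.mem_insert, Finset.mem_singleton, not_or] at hh
  obtain ⟨hS, hS', hT, hT'⟩ := hh
  by_cases bottom : h 1 0 * h 1 1 = 0
  · obtain hc | hd := mul_eq_zero.1 bottom
    · exact T_inv_mul_mem_leftHalf_of_lower_left_eq_zero hc hT hT'
    · exact T_inv_mul_mem_leftHalf_of_lower_right_eq_zero hd hS hS'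
  · have row_eq : (T⁻¹ * h) 1 = h 1 := T_inv_mul_apply_one h
    rw [mem_leftHalf_iff_of_bottom_row_ne_zero bottom,
      mem_leftHalf_iff_of_bottom_row_ne_zero (by rwa [row_eq]), row_eq]

theorem indicator_leftHalf_T_inv_mul {h : SL(2, ℤ)}
    (hh : h ∉ ({S, -S, T, -T} : Finset SL(2, ℤ))) :
    leftHalf.indicator (1 : SL(2, ℤ) → k) (T⁻¹ * h) = leftHalf.indicator 1 h :=
  Set.indicator_eq_indicator (T_inv_mul_mem_leftHalf hh) rfl

theorem isAlmostInvariant_indicator_leftHalf :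
    IsAlmostInvariant (leftHalf.indicator (1 : SL(2, ℤ) → k)) := by
  refine isAlmostInvariant_of_closure_eq_top SpecialLinearGroup.SL2Z_generators ?_
  rintro g (rfl | rfl)
  · exact Set.finite_empty.subset fun h ne ↦
      ne (Set.indicator_eq_indicator (S_inv_mul_mem_leftHalf h) rfl)
  · refine (Finset.finite_toSet {S, -S, T, -T}).subset fun h ne ↦ ?_
    by_contra hh
    exact ne (indicator_leftHalf_T_inv_mul hh)

/-- The cocycle with values in `2 × 2` matrices attached to the almost invariant set `leftHalf` and
a matrix `m`; for `m = E₀₁` its class spans the cohomology. -/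
noncomputable def leftHalfCocycle (m : Matrix (Fin 2) (Fin 2) k) :
    cocycles₁ (matrixConj (slToMatrix k)) :=
  isAlmostInvariant_indicator_leftHalf.cocycle (A := matrixConj (slToMatrix k)) m

theorem leftHalfCocycle_T (m : Matrix (Fin 2) (Fin 2) k) :
    leftHalfCocycle m T =
      2 • (matrixConjRep (slToMatrix k) S m - matrixConjRep (slToMatrix k) T m) := by
  let weight (h : SL(2, ℤ)) : k := leftHalf.indicator 1 (T⁻¹ * h) - leftHalf.indicator 1 h
  have support_subset : (Function.support fun h ↦ weight h • matrixConjRep (slToMatrix k) h m) ⊆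
      ({S, -S, T, -T} : Finset SL(2, ℤ)) := by
    intro h hh
    contrapose hh
    simp [weight, indicator_leftHalf_T_inv_mul hh]
  have weight_S : weight S = 1 := by
    simp [weight, mem_leftHalf, coe_S]
  have weight_neg_S : weight (-S) = 1 := by
    simp [weight, mem_leftHalf, coe_S, -mul_neg]
  have weight_T : weight T = -1 := by
    simp [weight, mem_leftHalf, coe_T]
  have weight_neg_T : weight (-T) = -1 := by
    simp [weight, mem_leftHalf, coe_T]
  calc leftHalfCocycle m T = ∑ᶠ h, weight h • matrixConjRep (slToMatrix k) h m :=
        isAlmostInvariant_indicator_leftHalf.cocycle_apply (A := matrixConj (slToMatrix k)) m T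
    _ = ∑ h ∈ {S, -S, T, -T}, weight h • matrixConjRep (slToMatrix k) h m :=
        finsum_eq_sum_of_support_subset _ support_subset
    _ = _ := by
        rw [Finset.sum_insert (by decide), Finset.sum_insert (by decide),
          Finset.sum_insert (by decide), Finset.sum_singleton, weight_S, weight_neg_S, weight_T,
          weight_neg_T, matrixConjRep_neg, matrixConjRep_neg]
        module

theorem lowerLeftAtT_leftHalfCocycle (m : Matrix (Fin 2) (Fin 2) k) :
    lowerLeftAtT k (leftHalfCocycle m) = 2 * (-m 0 1 - m 1 0) := by
  rw [lowerLeftAtT_apply, leftHalfCocycle_T, matrixConjRep_S, matrixConjRep_T]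
  simp

theorem lowerLeftAtT_surjective (h : IsUnit (2 : k)) : Function.Surjective (lowerLeftAtT k) := by
  intro x
  obtain ⟨y, rfl⟩ := h.neg.dvd (a := x)
  exact ⟨leftHalfCocycle !![0, y; 0, 0], by simp [lowerLeftAtT_leftHalfCocycle]⟩

end LeftHalf

theorem stmt19_general {k : Type} [CommRing k] (h : IsUnit (6 : k)) :
    Nonempty (((Ext k (Rep k SL(2, ℤ)) 1).obj
      (Opposite.op (matrixModule (slToMatrix k)))).obj (matrixModule (slToMatrix k)) ≅
        ModuleCat.of k k) := by
  have ker_eq (D) : lowerLeftAtT k D = 0 ↔ ⇑D ∈ coboundaries₁ (matrixConj (slToMatrix k)) :=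
    ⟨mem_coboundaries₁_of_lowerLeftAtT_eq_zero D h, lowerLeftAtT_eq_zero_of_mem_coboundaries₁ D⟩
  have surjective : Function.Surjective (lowerLeftAtT k) :=
    lowerLeftAtT_surjective (isUnit_of_dvd_unit ⟨3, by norm_num⟩ h)
  exact ⟨extIsoGroupCohomologyMatrixConj (slToMatrix k) 1 ≪≫
    H1IsoOfSurjective (lowerLeftAtT k) surjective ker_eq⟩

theorem Vstd_eq_matrixModule : Vstd = matrixModule (slToMatrix ℂ) := rfl

end SL2Z

/-- `Ext¹_{ℂG}(V, V) ≅ ℂ` for `G = SL(2,ℤ)` and `V` the standard 2-dimensional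
`ℂG`-module. -/
theorem stmt19 :
    Nonempty
      ((((Ext ℂ (Rep ℂ (Matrix.SpecialLinearGroup (Fin 2) ℤ)) 1).obj
          (Opposite.op Vstd)).obj Vstd) ≅ ModuleCat.of ℂ ℂ) := by
  rw [Vstd_eq_matrixModule]
  exact stmt19_general (IsUnit.mk0 6 (by norm_num))
end
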